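/- arXiv:2602.12001 — 2 statements merged into one kernel-verified Lean document; each statement's English description precedes it below -/
import Mathlib

section
/- Let n ≥ 2, R > 0, f ∈ C¹(ℝ), and let u ∈ W^{3,1}_loc(B_{2R}) be a stable solution of div(∇u/√(1+|∇u|²)) = −f(u) in B_{2R} ⊂ ℝⁿ. Set z := |∇u|². Then for every η ∈ C_c^∞(B_{2R}): ∫_{B_{2R}} z((n−1)z + (n−2)) / (1+z)^{3/2} · η² dx ≤ ∫_{B_{2R}} [ (x·∇u)²|∇η|² / √(1+z) + 2(2+z)(x·∇u)(∇u·∇η)η / (1+z)^{3/2} − 2zη(x·∇η) / √(1+z) − (x·∇u)²(∇u·∇η)² / (1+z)^{3/2} ] dx. -/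
open MeasureTheory Metric Real Filter Asymptotics Bornology
open scoped RealInnerProductSpace Topology

noncomputable section

/-- Euclidean space `ℝⁿ`. -/
abbrev Euc (n : ℕ) := EuclideanSpace ℝ (Fin n)

/-- `φ` is an admissible test function on `Ω`: smooth with compact support contained in `Ω`
(i.e. `φ ∈ C_c^∞(Ω)`). -/
def IsTestFun {n : ℕ} (Ω : Set (Euc n)) (φ : Euc n → ℝ) : Prop :=
  ContDiff ℝ (⊤ : ℕ∞) φ ∧ HasCompactSupport φ ∧ tsupport φ ⊆ Ω

/-- `u` is a weak solution of the mean curvature equation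
`div(∇u/√(1+|∇u|²)) = -f(u)` in `Ω`:  `u ∈ W^{1,1}_loc(Ω)`, `f(u) ∈ L¹_loc(Ω)` and
`∫_Ω ∇u·∇φ/√(1+|∇u|²) = ∫_Ω f(u) φ` for every `φ ∈ C_c^∞(Ω)`. -/
def IsWeakSolution {n : ℕ} (Ω : Set (Euc n)) (f : ℝ → ℝ) (u : Euc n → ℝ) : Prop :=
  LocallyIntegrableOn u Ω ∧
  LocallyIntegrableOn (fun x => ‖gradient u x‖) Ω ∧
  LocallyIntegrableOn (fun x => f (u x)) Ω ∧
  ∀ φ : Euc n → ℝ, IsTestFun Ω φ →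
    ∫ x in Ω, ⟪gradient u x, gradient φ x⟫ / Real.sqrt (1 + ‖gradient u x‖ ^ 2)
      = ∫ x in Ω, f (u x) * φ x

/-- `u` is a stable solution of `div(∇u/√(1+|∇u|²)) = -f(u)` in `Ω`: it is a weak solution,
`f'(u) ∈ L¹_loc(Ω)` and the second variation of the energy at `u` is nonnegative:
`∫_Ω f'(u) ξ² ≤ ∫_Ω (|∇ξ|²/√(1+|∇u|²) - (∇u·∇ξ)²/(1+|∇u|²)^{3/2})` for all `ξ ∈ C_c^∞(Ω)`. -/
def IsStableSolution {n : ℕ} (Ω : Set (Euc n)) (f : ℝ → ℝ) (u : Euc n → ℝ) : Prop :=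
  IsWeakSolution Ω f u ∧
  LocallyIntegrableOn (fun x => deriv f (u x)) Ω ∧
  ∀ ξ : Euc n → ℝ, IsTestFun Ω ξ →
    ∫ x in Ω, deriv f (u x) * ξ x ^ 2 ≤
      ∫ x in Ω, (‖gradient ξ x‖ ^ 2 / Real.sqrt (1 + ‖gradient u x‖ ^ 2)
        - ⟪gradient u x, gradient ξ x⟫ ^ 2 / (1 + ‖gradient u x‖ ^ 2) ^ ((3:ℝ)/2))

/-- A vector field `g` belongs to the Morrey space `M^p(Ω)`: there is `K > 0` with
`∫_{B_ρ(x₀) ∩ Ω} |g| ≤ K ρ^{n(1-1/p)}` for all `x₀ ∈ Ω` and `0 < ρ ≤ diam Ω`. -/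
def MemMorrey {n : ℕ} (Ω : Set (Euc n)) (p : ℝ) (g : Euc n → Euc n) : Prop :=
  ∃ K > (0:ℝ), ∀ x₀ ∈ Ω, ∀ ρ : ℝ, 0 < ρ → ρ ≤ Metric.diam Ω →
    ∫ x in Metric.ball x₀ ρ ∩ Ω, ‖g x‖ ≤ K * ρ ^ ((n : ℝ) * (1 - 1 / p))

/-- `z = |∇u|²`. -/
def zsq {n : ℕ} (u : Euc n → ℝ) (x : Euc n) : ℝ := ‖gradient u x‖ ^ 2

/-- `x·∇u`. -/
def xdu {n : ℕ} (u : Euc n → ℝ) (x : Euc n) : ℝ := ⟪x, gradient u x⟫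

theorem aux_grad_contDiff {n : ℕ} {g : Euc n → ℝ} {m k : WithTop ℕ∞} (hg : ContDiff ℝ k g)
    (hmk : m + 1 ≤ k) : ContDiff ℝ m (gradient g) := by
  have h := hg.fderiv_right hmk
  exact (InnerProductSpace.toDual ℝ (Euc n)).symm.contDiff.comp h

theorem aux_grad_zero {n : ℕ} {g : Euc n → ℝ} {x : Euc n} (hx : x ∉ tsupport g) :
    gradient g x = 0 := by
  have : fderiv ℝ g x = 0 := by
    by_contra h
    exact hx (support_fderiv_subset ℝ h)
  simp [gradient, this]

theorem aux_integrable {n : ℕ} {g : Euc n → ℝ} {K : Set (Euc n)} (hK : IsCompact K)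
    (hg : Continuous g) (h0 : ∀ x, x ∉ K → g x = 0) : Integrable g :=
  hg.integrable_of_hasCompactSupport (HasCompactSupport.intro hK h0)

theorem aux_euler {n : ℕ} {g : Euc n → ℝ} (hg : ContDiff ℝ 1 g) {K : Set (Euc n)}
    (hK : IsCompact K) (h0 : ∀ x, x ∉ K → g x = 0) :
    ∫ x, fderiv ℝ g x x = - (n : ℝ) * ∫ x, g x := by
  have hcs : HasCompactSupport g := HasCompactSupport.intro hK h0
  have hcf : Continuous (fderiv ℝ g) := hg.continuous_fderiv one_ne_zero
  have hcsf : HasCompactSupport (fderiv ℝ g) := hcs.fderiv ℝ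
  have hgi : Integrable g := hg.continuous.integrable_of_hasCompactSupport hcs
  have key : ∀ i : Fin n, Integrable (fun x : Euc n => x i * fderiv ℝ g x (EuclideanSpace.single i 1))
      ∧ ∫ x : Euc n, x i * fderiv ℝ g x (EuclideanSpace.single i 1) = - ∫ x, g x := by
    intro i
    have hd : ∀ x v : Euc n, fderiv ℝ (fun y : Euc n => y i) x v = v i := by
      intro x v
      have := (EuclideanSpace.proj (𝕜 := ℝ) i : Euc n →L[ℝ] ℝ).hasFDerivAt (x := x)
      have h2 : fderiv ℝ (fun y : Euc n => y i) x = (EuclideanSpace.proj (𝕜 := ℝ) i) :=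
        HasFDerivAt.fderiv this
      rw [h2]; rfl
    have hci : Continuous (fun y : Euc n => y i) := by fun_prop
    have hi : Integrable (fun x : Euc n => x i * fderiv ℝ g x (EuclideanSpace.single i 1)) := by
      refine Continuous.integrable_of_hasCompactSupport (by fun_prop) ?_
      exact HasCompactSupport.mul_left (f' := fun x => fderiv ℝ g x (EuclideanSpace.single i 1))
        (hcsf.comp_left (g := fun L : Euc n →L[ℝ] ℝ => L (EuclideanSpace.single i 1)) rfl)
    refine ⟨hi, ?_⟩
    rw [integral_mul_fderiv_eq_neg_fderiv_mul_of_integrable]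
    · simp [hd]
    · simpa [hd] using hgi
    · exact hi
    · exact Continuous.integrable_of_hasCompactSupport (hci.mul hg.continuous) hcs.mul_left
    · intro x _
      exact (EuclideanSpace.proj (𝕜 := ℝ) i : Euc n →L[ℝ] ℝ).differentiableAt
    · intro x _
      exact (hg.differentiable one_ne_zero) x
  have hsum : ∀ x : Euc n, fderiv ℝ g x x
      = ∑ i : Fin n, x i * fderiv ℝ g x (EuclideanSpace.single i 1) := by
    intro x
    have : x = ∑ i : Fin n, x i • (EuclideanSpace.single i (1:ℝ) : Euc n) := by
      have := (EuclideanSpace.basisFun (Fin n) ℝ).sum_repr x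
      simpa using this.symm
    conv_lhs => rw [this]
    rw [map_sum]
    simp [← this]
  simp_rw [hsum]
  rw [integral_finsetSum _ (fun i _ => (key i).1)]
  simp [fun i => (key i).2]

open scoped Convolution in
theorem aux_approx {n : ℕ} {U : Set (Euc n)} (hU : IsOpen U) {φ : Euc n → ℝ}
    (hφ : ContDiff ℝ 1 φ) (hc : HasCompactSupport φ) (hs : tsupport φ ⊆ U) :
    ∃ K : Set (Euc n), IsCompact K ∧ K ⊆ U ∧ ∀ ε > 0, ∃ g : Euc n → ℝ,
      ContDiff ℝ (⊤ : ℕ∞) g ∧ tsupport g ⊆ K ∧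
      ∀ x, dist (g x) (φ x) ≤ ε ∧ dist (fderiv ℝ g x) (fderiv ℝ φ x) ≤ ε := by
  obtain ⟨δ, hδ, hδU⟩ := hc.isCompact.exists_cthickening_subset_open hU hs
  refine ⟨cthickening δ (tsupport φ), hc.isCompact.cthickening, hδU, ?_⟩
  intro ε hε
  have hcf : Continuous (fderiv ℝ φ) := hφ.continuous_fderiv one_ne_zero
  have hu1 : UniformContinuous φ := hc.uniformContinuous_of_continuous hφ.continuous
  have hu2 : UniformContinuous (fderiv ℝ φ) :=
    (hc.fderiv ℝ).uniformContinuous_of_continuous hcf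
  obtain ⟨d1, hd1, h1⟩ := Metric.uniformContinuous_iff.1 hu1 ε hε
  obtain ⟨d2, hd2, h2⟩ := Metric.uniformContinuous_iff.1 hu2 ε hε
  set r := min δ (min d1 d2) with hr
  have hr0 : 0 < r := by positivity
  let b : ContDiffBump (0 : Euc n) := ⟨r / 2, r, by positivity, by linarith⟩
  have hb : b.rOut = r := rfl
  have hbi : LocallyIntegrable (b.normed volume) :=
    (b.continuous_normed).locallyIntegrable
  refine ⟨b.normed volume ⋆[ContinuousLinearMap.lsmul ℝ ℝ, volume] φ, ?_, ?_, ?_⟩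
  · exact b.hasCompactSupport_normed.contDiff_convolution_left _ b.contDiff_normed
      hφ.continuous.locallyIntegrable
  · refine closure_minimal ?_ isClosed_cthickening
    refine (MeasureTheory.support_convolution_subset _).trans ?_
    rintro _ ⟨y, hy, z, hz, rfl⟩
    rw [b.support_normed_eq, hb] at hy
    refine mem_cthickening_of_dist_le (y + z) z δ _ (subset_tsupport _ hz) ?_
    have : dist (y + z) z = ‖y‖ := by simp [dist_eq_norm]
    rw [this]
    have := mem_ball_zero_iff.1 hy
    exact this.le.trans (min_le_left _ _)
  · intro x
    constructor
    · apply b.dist_normed_convolution_le hφ.continuous.aestronglyMeasurable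
      intro y hy
      exact (h1 (lt_of_lt_of_le hy ((min_le_right _ _).trans (min_le_left _ _)))).le
    · have hd := hc.hasFDerivAt_convolution_right (ContinuousLinearMap.lsmul ℝ ℝ) hbi hφ x
      rw [hd.fderiv]
      have e : (b.normed volume ⋆[(ContinuousLinearMap.lsmul ℝ ℝ).precompR (Euc n), volume] fderiv ℝ φ) x
        = (b.normed volume ⋆[ContinuousLinearMap.lsmul ℝ ℝ, volume] fderiv ℝ φ) x := by
        unfold MeasureTheory.convolution
        congr 1
      rw [e]
      apply b.dist_normed_convolution_le hcf.aestronglyMeasurable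
      intro y hy
      exact (h2 (lt_of_lt_of_le hy ((min_le_right _ _).trans (min_le_right _ _)))).le

theorem aux_seq {n : ℕ} {U : Set (Euc n)} (hU : IsOpen U) {φ : Euc n → ℝ}
    (hφ : ContDiff ℝ 1 φ) (hc : HasCompactSupport φ) (hs : tsupport φ ⊆ U) :
    ∃ g : ℕ → Euc n → ℝ, (∀ k, IsTestFun U (g k)) ∧
      ∀ F : Euc n × ℝ × Euc n → ℝ, Continuous F → (∀ x, F (x, 0, 0) = 0) →
        Tendsto (fun k => ∫ x, F (x, g k x, gradient (g k) x)) atTop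
          (𝓝 (∫ x, F (x, φ x, gradient φ x))) := by
  obtain ⟨K, hK, hKU, hap⟩ := aux_approx hU hφ hc hs
  have hpos : ∀ k : ℕ, (0:ℝ) < 1 / ((k:ℝ) + 1) := fun k => by positivity
  choose g hg1 hg2 hg3 using fun k : ℕ => hap _ (hpos k)
  have hgr : ∀ k x, dist (gradient (g k) x) (gradient φ x) ≤ 1 / ((k:ℝ) + 1) := by
    intro k x
    unfold gradient
    rw [LinearIsometryEquiv.dist_map]
    exact (hg3 k x).2
  refine ⟨g, fun k => ⟨hg1 k, hK.of_isClosed_subset (isClosed_tsupport _) (hg2 k),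
    (hg2 k).trans hKU⟩, ?_⟩
  intro F hF hF0
  have hgφ : Continuous (gradient φ) := (aux_grad_contDiff (m := 0) hφ (by norm_num)).continuous
  obtain ⟨C1, hC1⟩ := hφ.continuous.bounded_above_of_compact_support hc
  have hcg : HasCompactSupport (gradient φ) := HasCompactSupport.intro hc.isCompact
    (fun x hx => aux_grad_zero hx)
  obtain ⟨C2, hC2⟩ := hgφ.bounded_above_of_compact_support hcg
  have hone : ∀ k : ℕ, 1 / ((k:ℝ) + 1) ≤ 1 := by
    intro k
    rw [div_le_one (by positivity)]
    have : (0:ℝ) ≤ k := by positivity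
    linarith
  have hcomp : IsCompact (K ×ˢ (closedBall (0:ℝ) (C1 + 1) ×ˢ closedBall (0:Euc n) (C2 + 1))) :=
    hK.prod ((isCompact_closedBall _ _).prod (isCompact_closedBall _ _))
  obtain ⟨B, hB⟩ := hcomp.exists_bound_of_continuousOn hF.continuousOn
  have hgk : ∀ k, Continuous (gradient (g k)) := fun k =>
    (aux_grad_contDiff (m := 0) (hg1 k) (by simp)).continuous
  refine tendsto_integral_of_dominated_convergence (K.indicator (fun _ => B)) ?_ ?_ ?_ ?_
  · intro k
    have := hgk k
    have := (hg1 k).continuous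
    exact Continuous.aestronglyMeasurable (by fun_prop)
  · rw [integrable_indicator_iff hK.measurableSet]
    exact integrableOn_const hK.measure_lt_top.ne
  · intro k
    refine Eventually.of_forall fun x => ?_
    by_cases hx : x ∈ K
    · rw [Set.indicator_of_mem hx]
      apply hB
      refine ⟨hx, ?_, ?_⟩
      · rw [mem_closedBall_zero_iff]
        have h1 := (hg3 k x).1
        rw [dist_eq_norm] at h1
        have h2 := norm_le_norm_add_norm_sub' (g k x) (φ x)
        have h3 := hC1 x
        have h4 := hone k
        linarith
      · rw [mem_closedBall_zero_iff]
        have h1 := hgr k x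
        rw [dist_eq_norm] at h1
        have h2 := norm_le_norm_add_norm_sub' (gradient (g k) x) (gradient φ x)
        have h3 := hC2 x
        have h4 := hone k
        linarith
    · rw [Set.indicator_of_notMem hx]
      have hx' : x ∉ tsupport (g k) := fun h => hx (hg2 k h)
      rw [image_eq_zero_of_notMem_tsupport hx', aux_grad_zero hx', hF0]
      simp
  · refine Eventually.of_forall fun x => ?_
    have hl : Tendsto (fun k : ℕ => 1 / ((k:ℝ) + 1)) atTop (𝓝 0) :=
      tendsto_one_div_add_atTop_nhds_zero_nat
    have t1 : Tendsto (fun k => g k x) atTop (𝓝 (φ x)) :=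
      tendsto_iff_dist_tendsto_zero.2 (squeeze_zero (fun _ => dist_nonneg)
        (fun k => (hg3 k x).1) hl)
    have t2 : Tendsto (fun k => gradient (g k) x) atTop (𝓝 (gradient φ x)) :=
      tendsto_iff_dist_tendsto_zero.2 (squeeze_zero (fun _ => dist_nonneg)
        (fun k => hgr k x) hl)
    exact (hF.tendsto _).comp (tendsto_const_nhds.prodMk_nhds (t1.prodMk_nhds t2))

theorem aux_sym {n : ℕ} {g : Euc n → ℝ} (hg : ContDiff ℝ 2 g) (x a b : Euc n) :
    ⟪fderiv ℝ (gradient g) x a, b⟫ = ⟪fderiv ℝ (gradient g) x b, a⟫ := by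
  have h2 : ContDiff ℝ 1 (fderiv ℝ g) := hg.fderiv_right (by norm_num)
  have hd : HasFDerivAt (fderiv ℝ g) (fderiv ℝ (fderiv ℝ g) x) x :=
    ((h2.differentiable one_ne_zero) x).hasFDerivAt
  have h3 : ∀ a b, ⟪fderiv ℝ (gradient g) x a, b⟫ = fderiv ℝ (fderiv ℝ g) x a b := by
    intro a b
    have h4 : HasFDerivAt (gradient g) _ x :=
      ((InnerProductSpace.toDual ℝ (Euc n)).symm.toContinuousLinearEquiv.hasFDerivAt).comp x hd
    rw [h4.fderiv]
    exact InnerProductSpace.toDual_symm_apply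
  rw [h3, h3]
  exact (hg.contDiffAt.isSymmSndFDerivAt (by simp)) a b

theorem aux_fderiv_grad {n : ℕ} (g : Euc n → ℝ) (x h : Euc n) :
    fderiv ℝ g x h = ⟪gradient g x, h⟫ := inner_gradient_left.symm

theorem aux_grad_ext {n : ℕ} {g : Euc n → ℝ} {x w : Euc n} (h : ∀ y, fderiv ℝ g x y = ⟪w, y⟫) :
    gradient g x = w := by
  refine ext_inner_right ℝ fun y => ?_
  rw [← aux_fderiv_grad, h]

theorem aux_grad_xdu {n : ℕ} {g : Euc n → ℝ} (hg : ContDiff ℝ 2 g) (x : Euc n) :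
    gradient (fun y => ⟪y, gradient g y⟫) x = gradient g x + fderiv ℝ (gradient g) x x := by
  have hG : ContDiff ℝ 1 (gradient g) := aux_grad_contDiff hg (by norm_num)
  have hd := (hG.differentiable one_ne_zero) x
  apply aux_grad_ext
  intro y
  rw [fderiv_inner_apply ℝ differentiableAt_fun_id hd]
  simp only [fderiv_fun_id, ContinuousLinearMap.id_apply]
  rw [inner_add_left, aux_sym hg x x y, real_inner_comm x, real_inner_comm y]
  ring

theorem aux_grad_mul {n : ℕ} {a b : Euc n → ℝ} {x : Euc n} (ha : DifferentiableAt ℝ a x)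
    (hb : DifferentiableAt ℝ b x) :
    gradient (fun y => a y * b y) x = a x • gradient b x + b x • gradient a x := by
  apply aux_grad_ext
  intro y
  rw [fderiv_fun_mul ha hb]
  simp [inner_add_left, inner_smul_left]

theorem aux_fderiv_q {n : ℕ} {P : Euc n → Euc n} {x : Euc n} (hP : DifferentiableAt ℝ P x)
    (h : Euc n) :
    fderiv ℝ (fun y => (√(1 + ‖P y‖ ^ 2))⁻¹) x h
      = - (√(1 + ‖P x‖ ^ 2))⁻¹ ^ 3 * ⟪P x, fderiv ℝ P x h⟫ := by
  have h1 := (hP.hasFDerivAt.norm_sq).const_add 1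
  have hpos : (0:ℝ) < 1 + ‖P x‖ ^ 2 := by positivity
  have hs : 0 < √(1 + ‖P x‖ ^ 2) := Real.sqrt_pos.2 hpos
  have h2 := (Real.hasDerivAt_sqrt hpos.ne').inv hs.ne'
  have h3 := h2.comp_hasFDerivAt x h1
  have h4 : HasFDerivAt (fun y => (√(1 + ‖P y‖ ^ 2))⁻¹) _ x := h3
  rw [h4.fderiv]
  simp
  field_simp

theorem aux_q_contDiff {n : ℕ} {P : Euc n → Euc n} {k : WithTop ℕ∞} (hP : ContDiff ℝ k P) :
    ContDiff ℝ k (fun y => (√(1 + ‖P y‖ ^ 2))⁻¹) := by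
  have h1 : ContDiff ℝ k (fun y => 1 + ‖P y‖ ^ 2) := contDiff_const.add (hP.norm_sq ℝ)
  have hp : ∀ x, 1 + ‖P x‖ ^ 2 ≠ 0 := fun x => by positivity
  exact (h1.sqrt hp).inv (fun x => (Real.sqrt_pos.2 (by positivity)).ne')

theorem aux_tsupport {n : ℕ} {g : Euc n → ℝ} {K : Set (Euc n)} (hK : IsClosed K)
    (h0 : ∀ x, x ∉ K → g x = 0) : tsupport g ⊆ K := by
  refine closure_minimal (fun x hx => ?_) hK
  by_contra h
  exact hx (h0 x h)

theorem aux_grad_zero' {n : ℕ} {g : Euc n → ℝ} {K : Set (Euc n)} (hK : IsClosed K)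
    (h0 : ∀ x, x ∉ K → g x = 0) (x : Euc n) (hx : x ∉ K) : gradient g x = 0 :=
  aux_grad_zero (fun h => hx (aux_tsupport hK h0 h))

theorem aux_rpow (z : ℝ) (hz : 0 ≤ z) : (1 + z) ^ ((3:ℝ)/2) = √(1 + z) ^ 3 := by
  have : (0:ℝ) ≤ 1 + z := by linarith
  rw [Real.sqrt_eq_rpow, ← Real.rpow_natCast, ← Real.rpow_mul this]
  norm_num

theorem aux_ext {n : ℕ} {U : Set (Euc n)} (hU : IsOpen U) {f : ℝ → ℝ} {u : Euc n → ℝ}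
    (hf : ContDiff ℝ 1 f) (hu : ContDiff ℝ 3 u)
    (hw : ∀ φ : Euc n → ℝ, IsTestFun U φ →
      ∫ x, ⟪gradient u x, gradient φ x⟫ / √(1 + ‖gradient u x‖ ^ 2) = ∫ x, f (u x) * φ x)
    (hst : ∀ ξ : Euc n → ℝ, IsTestFun U ξ →
      ∫ x, deriv f (u x) * ξ x ^ 2 ≤ ∫ x, (‖gradient ξ x‖ ^ 2 / √(1 + ‖gradient u x‖ ^ 2)
        - ⟪gradient u x, gradient ξ x⟫ ^ 2 / (1 + ‖gradient u x‖ ^ 2) ^ ((3:ℝ)/2)))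
    {φ : Euc n → ℝ} (hφ : ContDiff ℝ 1 φ) (hc : HasCompactSupport φ) (hs : tsupport φ ⊆ U) :
    (∫ x, (√(1 + ‖gradient u x‖ ^ 2))⁻¹ * ⟪gradient u x, gradient φ x⟫ = ∫ x, f (u x) * φ x) ∧
    ∫ x, deriv f (u x) * φ x ^ 2 ≤ ∫ x, (‖gradient φ x‖ ^ 2 * (√(1 + ‖gradient u x‖ ^ 2))⁻¹
        - ⟪gradient u x, gradient φ x⟫ ^ 2 * (√(1 + ‖gradient u x‖ ^ 2))⁻¹ ^ 3) := by
  obtain ⟨g, hg, hlim⟩ := aux_seq hU hφ hc hs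
  have hP : Continuous (gradient u) :=
    (aux_grad_contDiff (m := 2) hu (by norm_num)).continuous
  have hq : Continuous (fun y => (√(1 + ‖gradient u y‖ ^ 2))⁻¹) :=
    (aux_q_contDiff (aux_grad_contDiff (m := 2) hu (by norm_num))).continuous
  have hdf : Continuous (deriv f) := hf.continuous_deriv le_rfl
  have hfc := hf.continuous
  have huc := hu.continuous
  have e : ∀ x, (1 + ‖gradient u x‖ ^ 2) ^ ((3:ℝ)/2) = √(1 + ‖gradient u x‖ ^ 2) ^ 3 :=
    fun x => aux_rpow _ (by positivity)
  constructor
  · have l1 := hlim (fun w => (√(1 + ‖gradient u w.1‖ ^ 2))⁻¹ * ⟪gradient u w.1, w.2.2⟫)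
      ((hq.comp continuous_fst).mul ((hP.comp continuous_fst).inner (by fun_prop))) (by simp)
    have l2 := hlim (fun w => f (u w.1) * w.2.1) (by fun_prop) (by simp)
    refine tendsto_nhds_unique l1 (l2.congr fun k => ?_)
    simp only
    rw [← hw _ (hg k)]
    simp only [div_eq_inv_mul]
  · have l1 := hlim (fun w => deriv f (u w.1) * w.2.1 ^ 2) (by fun_prop) (by simp)
    have hq1 : Continuous (fun w : Euc n × ℝ × Euc n => (√(1 + ‖gradient u w.1‖ ^ 2))⁻¹) :=
      hq.comp continuous_fst
    have l2 := hlim (fun w => ‖w.2.2‖ ^ 2 * (√(1 + ‖gradient u w.1‖ ^ 2))⁻¹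
        - ⟪gradient u w.1, w.2.2⟫ ^ 2 * (√(1 + ‖gradient u w.1‖ ^ 2))⁻¹ ^ 3)
      ((Continuous.mul (by fun_prop) hq1).sub
        (Continuous.mul (((hP.comp continuous_fst).inner (by fun_prop)).pow 2) (hq1.pow 3)))
      (by simp)
    refine le_of_tendsto_of_tendsto' l1 l2 fun k => ?_
    have := hst _ (hg k)
    simp only [e] at this
    simp only [div_eq_mul_inv] at this
    simpa only [inv_pow] using this

theorem aux_int5 {n : ℕ} {a b c d e : Euc n → ℝ} (ha : Integrable a) (hb : Integrable b)
    (hc : Integrable c) (hd : Integrable d) (he : Integrable e) :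
    ∫ x, (a x - b x + c x + d x + e x)
      = (∫ x, a x) - (∫ x, b x) + (∫ x, c x) + (∫ x, d x) + ∫ x, e x := by
  have h1 : Integrable (fun x => a x - b x) := ha.sub hb
  have h2 : Integrable (fun x => a x - b x + c x) := h1.add hc
  have h3 : Integrable (fun x => a x - b x + c x + d x) := h2.add hd
  rw [integral_add h3 he, integral_add h2 hd, integral_add h1 hc, integral_sub ha hb]

theorem aux_int6 {n : ℕ} {l a b c d e : Euc n → ℝ} (hl : Integrable l) (ha : Integrable a)
    (hb : Integrable b) (hc : Integrable c) (hd : Integrable d) (he : Integrable e) :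
    ∫ x, (l x + (a x + b x + c x - d x - e x))
      = (∫ x, l x) + ((∫ x, a x) + (∫ x, b x) + (∫ x, c x) - (∫ x, d x) - ∫ x, e x) := by
  have h1 : Integrable (fun x => a x + b x) := ha.add hb
  have h2 : Integrable (fun x => a x + b x + c x) := h1.add hc
  have h3 : Integrable (fun x => a x + b x + c x - d x) := h2.sub hd
  have h4 : Integrable (fun x => a x + b x + c x - d x - e x) := h3.sub he
  rw [integral_add hl h4, integral_sub h3 he, integral_sub h2 hd, integral_add h1 hc,
    integral_add ha hb]

theorem aux_core {n : ℕ} {U : Set (Euc n)} (hU : IsOpen U) {f : ℝ → ℝ} {u : Euc n → ℝ}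
    (hf : ContDiff ℝ 1 f) (hu : ContDiff ℝ 3 u)
    (hw : ∀ φ : Euc n → ℝ, IsTestFun U φ →
      ∫ x, ⟪gradient u x, gradient φ x⟫ / √(1 + ‖gradient u x‖ ^ 2) = ∫ x, f (u x) * φ x)
    (hst : ∀ ξ : Euc n → ℝ, IsTestFun U ξ →
      ∫ x, deriv f (u x) * ξ x ^ 2 ≤ ∫ x, (‖gradient ξ x‖ ^ 2 / √(1 + ‖gradient u x‖ ^ 2)
        - ⟪gradient u x, gradient ξ x⟫ ^ 2 / (1 + ‖gradient u x‖ ^ 2) ^ ((3:ℝ)/2)))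
    {η : Euc n → ℝ} (hη : IsTestFun U η) :
    ∫ x, zsq u x * (((n:ℝ) - 1) * zsq u x + ((n:ℝ) - 2))
            / (1 + zsq u x) ^ ((3:ℝ)/2) * η x ^ 2
        ≤ ∫ x,
            (xdu u x ^ 2 * ‖gradient η x‖ ^ 2 / Real.sqrt (1 + zsq u x)
              + 2 * (2 + zsq u x) * xdu u x * ⟪gradient u x, gradient η x⟫ * η x
                  / (1 + zsq u x) ^ ((3:ℝ)/2)
              - 2 * zsq u x * η x * ⟪x, gradient η x⟫ / Real.sqrt (1 + zsq u x)
              - xdu u x ^ 2 * ⟪gradient u x, gradient η x⟫ ^ 2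
                  / (1 + zsq u x) ^ ((3:ℝ)/2)) := by
  obtain ⟨hη1, hη2, hη3⟩ := hη
  set K := tsupport η with hKdef
  have hK : IsCompact K := hη2.isCompact
  have hKc : IsClosed K := isClosed_tsupport η
  have hη0 : ∀ x, x ∉ K → η x = 0 := fun x hx => image_eq_zero_of_notMem_tsupport hx
  have hN0 : ∀ x, x ∉ K → gradient η x = 0 := fun x hx => aux_grad_zero hx
  have hη2' : ContDiff ℝ 2 η := (contDiff_infty.1 hη1) 2
  have hPd : ContDiff ℝ 2 (gradient u) := aux_grad_contDiff hu (by norm_num)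
  have hNd : ContDiff ℝ 1 (gradient η) := aux_grad_contDiff hη2' (by norm_num)
  obtain ⟨P, hP⟩ : ∃ P, P = gradient u := ⟨_, rfl⟩
  obtain ⟨N, hN⟩ : ∃ N, N = gradient η := ⟨_, rfl⟩
  obtain ⟨q, hq⟩ : ∃ q : Euc n → ℝ, q = fun y => (√(1 + ‖P y‖ ^ 2))⁻¹ := ⟨_, rfl⟩
  obtain ⟨v, hv⟩ : ∃ v : Euc n → ℝ, v = fun y => ⟪y, P y⟫ := ⟨_, rfl⟩
  obtain ⟨ξ, hξ⟩ : ∃ ξ : Euc n → ℝ, ξ = fun y => v y * η y := ⟨_, rfl⟩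
  obtain ⟨ψ, hψ⟩ : ∃ ψ : Euc n → ℝ, ψ = fun y => ξ y * η y := ⟨_, rfl⟩
  obtain ⟨τ, hτ⟩ : ∃ τ : Euc n → ℝ, τ = fun y => ⟪y, gradient ψ y⟫ := ⟨_, rfl⟩
  rw [← hP] at hPd
  rw [← hN] at hNd hN0
  have hqd : ContDiff ℝ 2 q := by rw [hq]; exact aux_q_contDiff hPd
  have hvd : ContDiff ℝ 2 v := by rw [hv]; exact contDiff_id.inner ℝ hPd
  have hξd : ContDiff ℝ 2 ξ := by rw [hξ]; exact hvd.mul hη2'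
  have hψd : ContDiff ℝ 2 ψ := by rw [hψ]; exact hξd.mul hη2'
  have hYd : ContDiff ℝ 1 (gradient ψ) := aux_grad_contDiff hψd (by norm_num)
  have hτd : ContDiff ℝ 1 τ := by rw [hτ]; exact contDiff_id.inner ℝ hYd
  have dP : Differentiable ℝ P := hPd.differentiable (by norm_num)
  have dq : Differentiable ℝ q := hqd.differentiable (by norm_num)
  have dv : Differentiable ℝ v := hvd.differentiable (by norm_num)
  have dξ : Differentiable ℝ ξ := hξd.differentiable (by norm_num)
  have dψ : Differentiable ℝ ψ := hψd.differentiable (by norm_num)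
  have dη : Differentiable ℝ η := hη2'.differentiable (by norm_num)
  have dY : Differentiable ℝ (gradient ψ) := hYd.differentiable (by norm_num)
  have du : Differentiable ℝ u := hu.differentiable (by norm_num)
  have df : Differentiable ℝ f := hf.differentiable (by norm_num)
  -- gradients
  have gv : ∀ x, gradient v x = P x + fderiv ℝ P x x := by
    intro x
    rw [hv, hP]
    exact aux_grad_xdu (hu.of_le (by norm_num)) x
  have gξ : ∀ x, gradient ξ x = v x • N x + η x • (P x + fderiv ℝ P x x) := by
    intro x
    rw [hξ, aux_grad_mul (dv x) (dη x), gv, hN]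
  have gψ : ∀ x, gradient ψ x
      = ξ x • N x + η x • (v x • N x + η x • (P x + fderiv ℝ P x x)) := by
    intro x
    rw [hψ, aux_grad_mul (dξ x) (dη x), gξ, hN]
  have gτ : ∀ x, gradient τ x = gradient ψ x + fderiv ℝ (gradient ψ) x x := by
    intro x
    rw [hτ]
    exact aux_grad_xdu hψd x
  have hξ0 : ∀ x, x ∉ K → ξ x = 0 := fun x hx => by rw [hξ]; simp [hη0 x hx]
  have hψ0 : ∀ x, x ∉ K → ψ x = 0 := fun x hx => by rw [hψ]; simp [hη0 x hx]
  have hY0 : ∀ x, x ∉ K → gradient ψ x = 0 := aux_grad_zero' hKc hψ0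
  have hτ0 : ∀ x, x ∉ K → τ x = 0 := fun x hx => by rw [hτ]; simp [hY0 x hx]
  have hT0 : ∀ x, x ∉ K → gradient τ x = 0 := aux_grad_zero' hKc hτ0
  have hqf : ∀ x h, fderiv ℝ q x h = - q x ^ 3 * ⟪P x, fderiv ℝ P x h⟫ := by
    intro x h
    rw [hq]
    exact aux_fderiv_q (dP x) h
  -- extended equation
  have test : ∀ {φ : Euc n → ℝ}, ContDiff ℝ 1 φ → (∀ x, x ∉ K → φ x = 0) →
      (∫ x, q x * ⟪P x, gradient φ x⟫ = ∫ x, f (u x) * φ x) ∧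
      ∫ x, deriv f (u x) * φ x ^ 2 ≤ ∫ x, (‖gradient φ x‖ ^ 2 * q x
        - ⟪P x, gradient φ x⟫ ^ 2 * q x ^ 3) := by
    intro φ h1 h0
    have := aux_ext hU hf hu hw hst h1 (HasCompactSupport.intro hK h0)
      ((aux_tsupport hKc h0).trans hη3)
    rw [hq, hP]
    exact this
  have wψ := (test (hψd.of_le (by norm_num)) hψ0).1
  have wτ := (test hτd hτ0).1
  have sξ := (test (hξd.of_le (by norm_num)) hξ0).2
  -- continuity
  have cP := hPd.continuous
  have cq := hqd.continuous
  have cv := hvd.continuous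
  have cξ := hξd.continuous
  have cψ := hψd.continuous
  have cη := hη2'.continuous
  have cY := hYd.continuous
  have cτ := hτd.continuous
  have cN := hNd.continuous
  have cu := hu.continuous
  have cf := hf.continuous
  have cdf : Continuous (deriv f) := hf.continuous_deriv le_rfl
  have cT : Continuous (gradient τ) := (aux_grad_contDiff (m := 0) hτd (by norm_num)).continuous
  have cH : Continuous (fderiv ℝ P) := hPd.continuous_fderiv (by norm_num)
  -- the three Euler identities
  have d1 : ContDiff ℝ 1 (fun x => q x * ⟪P x, gradient ψ x⟫) :=
    (hqd.of_le (by norm_num)).mul ((hPd.of_le (by norm_num)).inner ℝ hYd)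
  have d2 : ContDiff ℝ 1 (fun x => f (u x) * ψ x) :=
    (hf.comp (hu.of_le (by norm_num))).mul (hψd.of_le (by norm_num))
  have d3 : ContDiff ℝ 1 (fun x => ‖P x‖ ^ 2 * q x * η x ^ 2) :=
    (((hPd.norm_sq ℝ).mul hqd).mul (hη2'.pow 2)).of_le (by norm_num)
  have E1 := aux_euler d1 hK (fun x hx => by simp [hY0 x hx])
  have E2 := aux_euler d2 hK (fun x hx => by simp [hψ0 x hx])
  have E3 := aux_euler d3 hK (fun x hx => by simp [hη0 x hx])
  have F1 : ∀ x, fderiv ℝ (fun x => q x * ⟪P x, gradient ψ x⟫) x x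
      = q x * ⟪fderiv ℝ P x x, gradient ψ x⟫ - q x ^ 3 * ⟪P x, fderiv ℝ P x x⟫ * ⟪P x, gradient ψ x⟫
        + q x * ⟪P x, gradient τ x⟫ - q x * ⟪P x, gradient ψ x⟫ := by
    intro x
    rw [fderiv_fun_mul (dq x) ((dP x).inner ℝ (dY x)), gτ, inner_add_right]
    simp only [add_apply, smul_apply, smul_eq_mul]
    rw [fderiv_inner_apply ℝ (dP x) (dY x), hqf]
    ring
  have F2 : ∀ x, fderiv ℝ (fun x => f (u x) * ψ x) x x
      = deriv f (u x) * ξ x ^ 2 + f (u x) * τ x := by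
    intro x
    have h1 : HasFDerivAt (fun x => f (u x)) (deriv f (u x) • fderiv ℝ u x) x :=
      (df (u x)).hasDerivAt.comp_hasFDerivAt x (du x).hasFDerivAt
    rw [fderiv_fun_mul h1.differentiableAt (dψ x), h1.fderiv]
    simp only [add_apply, smul_apply, smul_eq_mul,
      aux_fderiv_grad]
    have h2 : ⟪gradient u x, x⟫ = v x := by rw [hv, hP, real_inner_comm]
    have h3 : ⟪gradient ψ x, x⟫ = τ x := by rw [hτ, real_inner_comm]
    rw [h2, h3, hψ, hξ]
    ring
  have F3 : ∀ x, fderiv ℝ (fun x => ‖P x‖ ^ 2 * q x * η x ^ 2) x x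
      = 2 * ⟪P x, fderiv ℝ P x x⟫ * q x * η x ^ 2
        - ‖P x‖ ^ 2 * q x ^ 3 * ⟪P x, fderiv ℝ P x x⟫ * η x ^ 2
        + 2 * ‖P x‖ ^ 2 * q x * η x * ⟪x, N x⟫ := by
    intro x
    have h1 := (dP x).hasFDerivAt.norm_sq
    have h2 := (h1.mul (dq x).hasFDerivAt).mul ((dη x).hasFDerivAt.pow 2)
    have h3 : fderiv ℝ (fun x => ‖P x‖ ^ 2 * q x * η x ^ 2) x = _ := h2.fderiv
    rw [h3]
    have h4 : fderiv ℝ η x x = ⟪x, N x⟫ := by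
      rw [aux_fderiv_grad, hN, real_inner_comm]
    simp [hqf, h4, -inner_gradient_left, -inner_gradient_right]
    ring
  -- integrability
  have iD1 : Integrable (fun x => fderiv ℝ (fun x => q x * ⟪P x, gradient ψ x⟫) x x) := by
    refine aux_integrable hK (by simp_rw [F1]; fun_prop) (fun x hx => ?_)
    rw [F1]; simp [hY0 x hx, hT0 x hx]
  have ia : Integrable (fun x => q x * ⟪P x, gradient ψ x⟫) :=
    aux_integrable hK (by fun_prop) (fun x hx => by simp [hY0 x hx])
  have ib : Integrable (fun x => q x * ⟪P x, gradient τ x⟫) :=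
    aux_integrable hK (by fun_prop) (fun x hx => by simp [hT0 x hx])
  have ic : Integrable (fun x => q x ^ 3 * ⟪P x, gradient ψ x⟫) :=
    aux_integrable hK (by fun_prop) (fun x hx => by simp [hY0 x hx])
  have iN : Integrable (fun x => v x ^ 2 * (‖N x‖ ^ 2 * q x - ⟪P x, N x⟫ ^ 2 * q x ^ 3)) :=
    aux_integrable hK (by fun_prop) (fun x hx => by simp [hN0 x hx])
  have iS : Integrable (fun x => deriv f (u x) * ξ x ^ 2) :=
    aux_integrable hK (by fun_prop) (fun x hx => by simp [hξ0 x hx])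
  have ifτ : Integrable (fun x => f (u x) * τ x) :=
    aux_integrable hK (by fun_prop) (fun x hx => by simp [hτ0 x hx])
  have iD3 : Integrable (fun x => fderiv ℝ (fun x => ‖P x‖ ^ 2 * q x * η x ^ 2) x x) := by
    refine aux_integrable hK (by simp_rw [F3]; fun_prop) (fun x hx => ?_)
    rw [F3]; simp [hη0 x hx]
  have i3 : Integrable (fun x => ‖P x‖ ^ 2 * q x * η x ^ 2) :=
    aux_integrable hK (by fun_prop) (fun x hx => by simp [hη0 x hx])
  have iL : Integrable (fun x => ‖P x‖ ^ 2 * (((n:ℝ) - 1) * ‖P x‖ ^ 2 + ((n:ℝ) - 2))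
      * q x ^ 3 * η x ^ 2) :=
    aux_integrable hK (by fun_prop) (fun x hx => by simp [hη0 x hx])
  have hq2 : ∀ x, q x ^ 2 * (1 + ‖P x‖ ^ 2) = 1 := by
    intro x
    have hp : (0:ℝ) < 1 + ‖P x‖ ^ 2 := by positivity
    rw [hq]
    simp only [inv_pow, Real.sq_sqrt hp.le]
    exact inv_mul_cancel₀ hp.ne'
  have eL : ∀ x, zsq u x * (((n:ℝ) - 1) * zsq u x + ((n:ℝ) - 2))
            / (1 + zsq u x) ^ ((3:ℝ)/2) * η x ^ 2
      = ‖P x‖ ^ 2 * (((n:ℝ) - 1) * ‖P x‖ ^ 2 + ((n:ℝ) - 2)) * q x ^ 3 * η x ^ 2 := by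
    intro x
    rw [aux_rpow _ (by unfold zsq; positivity), hq, hP, div_eq_mul_inv, inv_pow]
    rfl
  have eR : ∀ x, (xdu u x ^ 2 * ‖gradient η x‖ ^ 2 / Real.sqrt (1 + zsq u x)
              + 2 * (2 + zsq u x) * xdu u x * ⟪gradient u x, gradient η x⟫ * η x
                  / (1 + zsq u x) ^ ((3:ℝ)/2)
              - 2 * zsq u x * η x * ⟪x, gradient η x⟫ / Real.sqrt (1 + zsq u x)
              - xdu u x ^ 2 * ⟪gradient u x, gradient η x⟫ ^ 2
                  / (1 + zsq u x) ^ ((3:ℝ)/2))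
      = ‖P x‖ ^ 2 * (((n:ℝ) - 1) * ‖P x‖ ^ 2 + ((n:ℝ) - 2)) * q x ^ 3 * η x ^ 2
        + (v x ^ 2 * (‖N x‖ ^ 2 * q x - ⟪P x, N x⟫ ^ 2 * q x ^ 3)
        + q x * ⟪P x, gradient ψ x⟫ + q x ^ 3 * ⟪P x, gradient ψ x⟫
        - fderiv ℝ (fun x => ‖P x‖ ^ 2 * q x * η x ^ 2) x x
        - n * (‖P x‖ ^ 2 * q x * η x ^ 2)) := by
    intro x
    have e1 : zsq u x = ‖P x‖ ^ 2 := by rw [hP]; rfl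
    have e2 : xdu u x = v x := by rw [hv, hP]; rfl
    have e3 : √(1 + ‖P x‖ ^ 2) = (q x)⁻¹ := by rw [hq]; simp
    rw [aux_rpow _ (by unfold zsq; positivity), e1, e2, e3, ← hP, ← hN, F3, gψ]
    simp only [inner_add_right, inner_smul_right, real_inner_self_eq_norm_sq, inv_pow,
      div_inv_eq_mul]
    have e4 : ξ x = v x * η x := by rw [hξ]
    rw [e4]
    have e5 : q x = q x ^ 3 * (1 + ‖P x‖ ^ 2) := by
      linear_combination (-q x) * hq2 x
    generalize ⟪P x, fderiv ℝ P x x⟫ = A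
    generalize ⟪P x, N x⟫ = B
    generalize ⟪x, N x⟫ = D
    linear_combination (-2 * v x * B * η x - A * η x ^ 2
      + 2 * A * η x ^ 2 - ‖P x‖ ^ 2 * η x ^ 2 + n * ‖P x‖ ^ 2 * η x ^ 2) * e5
  have eS : ∀ x, ‖gradient ξ x‖ ^ 2 * q x - ⟪P x, gradient ξ x⟫ ^ 2 * q x ^ 3
      = fderiv ℝ (fun x => q x * ⟪P x, gradient ψ x⟫) x x - q x * ⟪P x, gradient τ x⟫
        + q x * ⟪P x, gradient ψ x⟫ + q x ^ 3 * ⟪P x, gradient ψ x⟫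
        + v x ^ 2 * (‖N x‖ ^ 2 * q x - ⟪P x, N x⟫ ^ 2 * q x ^ 3) := by
    intro x
    rw [F1, gξ, gψ, ← real_inner_self_eq_norm_sq, ← real_inner_self_eq_norm_sq]
    have e4 : ξ x = v x * η x := by rw [hξ]
    have e5 : q x = q x ^ 3 * (1 + ⟪P x, P x⟫) := by
      rw [real_inner_self_eq_norm_sq]
      linear_combination (-q x) * hq2 x
    rw [e4]
    simp only [inner_add_right, inner_smul_right, inner_add_left, real_inner_smul_left]
    have c1 : ⟪N x, P x⟫ = ⟪P x, N x⟫ := real_inner_comm _ _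
    have c2 : ⟪N x, fderiv ℝ P x x⟫ = ⟪fderiv ℝ P x x, N x⟫ := real_inner_comm _ _
    have c3 : ⟪fderiv ℝ P x x, P x⟫ = ⟪P x, fderiv ℝ P x x⟫ := real_inner_comm _ _
    rw [c1, c2, c3]
    linear_combination (2 * v x * η x * ⟪P x, N x⟫
      + η x ^ 2 * (⟪P x, P x⟫ + ⟪P x, fderiv ℝ P x x⟫)) * e5
  simp_rw [eL, eR]
  simp_rw [eS] at sξ
  simp_rw [F2] at E2
  rw [aux_int6 iL iN ia ic iD3 (i3.const_mul _), integral_const_mul, E3]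
  rw [aux_int5 iD1 ib ia ic iN, E1] at sξ
  rw [integral_add iS ifτ] at E2
  rw [← wψ, ← wτ] at E2
  linarith

/-- **Lemma (Stability inequality tested with `ξ = (x·∇u) η`, second-order terms removed).**
Let `n ≥ 2`, `R > 0`, `f ∈ C¹(ℝ)` and let `u ∈ W^{3,1}_loc(B_{2R})` be a stable solution
of `div(∇u/√(1+|∇u|²)) = -f(u)` in `B_{2R} ⊂ ℝⁿ`.  Then for every `η ∈ C_c^∞(B_{2R})`:
`∫ z((n-1)z+(n-2))/(1+z)^{3/2} η² ≤ ∫ [ (x·∇u)²|∇η|²/√(1+z) + 2(2+z)(x·∇u)(∇u·∇η)η/(1+z)^{3/2}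
  - 2zη(x·∇η)/√(1+z) - (x·∇u)²(∇u·∇η)²/(1+z)^{3/2} ]`. -/
theorem stmt_10 (n : ℕ) (hn : 2 ≤ n) (R : ℝ) (hR : 0 < R)
    (f : ℝ → ℝ) (u : Euc n → ℝ)
    (hf : ContDiff ℝ 1 f)
    (hreg : ContDiffOn ℝ 3 u (ball (0 : Euc n) (2*R)))
    (hstable : IsStableSolution (ball (0 : Euc n) (2*R)) f u) :
    ∀ η : Euc n → ℝ, IsTestFun (ball (0 : Euc n) (2*R)) η →
      ∫ x in ball (0 : Euc n) (2*R),
          zsq u x * (((n:ℝ) - 1) * zsq u x + ((n:ℝ) - 2))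
            / (1 + zsq u x) ^ ((3:ℝ)/2) * η x ^ 2
        ≤ ∫ x in ball (0 : Euc n) (2*R),
            (xdu u x ^ 2 * ‖gradient η x‖ ^ 2 / Real.sqrt (1 + zsq u x)
              + 2 * (2 + zsq u x) * xdu u x * ⟪gradient u x, gradient η x⟫ * η x
                  / (1 + zsq u x) ^ ((3:ℝ)/2)
              - 2 * zsq u x * η x * ⟪x, gradient η x⟫ / Real.sqrt (1 + zsq u x)
              - xdu u x ^ 2 * ⟪gradient u x, gradient η x⟫ ^ 2
                  / (1 + zsq u x) ^ ((3:ℝ)/2)) := by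
  intro η hη
  obtain ⟨⟨-, -, -, hw⟩, -, hst⟩ := hstable
  set Ω := ball (0 : Euc n) (2*R) with hΩ
  have hΩo : IsOpen Ω := isOpen_ball
  obtain ⟨hη1, hη2, hη3⟩ := hη
  -- cut-off equal to one near the support of `η`
  obtain ⟨δ, hδ, hδU⟩ := hη2.isCompact.exists_cthickening_subset_open hΩo hη3
  obtain ⟨χ, hχ1, hχ2, hχ4⟩ : ∃ χ : Euc n → ℝ, ContDiff ℝ 3 χ ∧ tsupport χ ⊆ Ω ∧
      ∀ x ∈ thickening δ (tsupport η), χ x = 1 := by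
    obtain ⟨χ, h0, h1, -⟩ := exists_contMDiffMap_zero_one_nhds_of_isClosed (n := 3)
      (modelWithCornersSelf ℝ (Euc n)) hΩo.isClosed_compl
      (isClosed_cthickening (δ := δ) (E := tsupport η))
      (Set.disjoint_left.2 fun x hx hx' => hx (hδU hx'))
    refine ⟨χ, χ.contMDiff.contDiff, ?_, ?_⟩
    · intro x hx
      by_contra hxΩ
      have h2 : ∀ᶠ y in 𝓝 x, χ y = 0 :=
        Filter.Eventually.filter_mono (nhds_le_nhdsSet (s := Ωᶜ) hxΩ) h0
      exact (notMem_tsupport_iff_eventuallyEq.2 h2) hx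
    · intro x hx
      exact h1.self_of_nhdsSet x (thickening_subset_cthickening _ _ hx)
  set U := thickening δ (tsupport η) with hUdef
  have hUo : IsOpen U := isOpen_thickening
  have hUΩ : U ⊆ Ω := (thickening_subset_cthickening _ _).trans hδU
  have hηU : tsupport η ⊆ U := self_subset_thickening hδ _
  obtain ⟨w, hw_def⟩ : ∃ w : Euc n → ℝ, w = fun x => χ x * u x := ⟨_, rfl⟩
  have hwd : ContDiff ℝ 3 w := by
    rw [contDiff_iff_contDiffAt]
    intro x
    by_cases hx : x ∈ tsupport χ
    · rw [hw_def]
      exact hχ1.contDiffAt.mul ((hreg x (hχ2 hx)).contDiffAt (hΩo.mem_nhds (hχ2 hx)))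
    · have : w =ᶠ[𝓝 x] fun _ => 0 := by
        filter_upwards [(isClosed_tsupport χ).isOpen_compl.mem_nhds hx] with y hy
        rw [hw_def]
        simp [image_eq_zero_of_notMem_tsupport hy]
      exact contDiffAt_const.congr_of_eventuallyEq this
  have hwu : ∀ x ∈ U, w x = u x := fun x hx => by rw [hw_def]; simp [hχ4 x hx]
  have hgw : ∀ x ∈ U, gradient w x = gradient u x := fun x hx =>
    Filter.EventuallyEq.gradient_eq (by
      filter_upwards [hUo.mem_nhds hx] with y hy using hwu y hy)
  -- passing between integrals over the ball (for `u`) and the whole space (for `w`)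
  have swap : ∀ F G : Euc n → ℝ, (∀ x ∈ U, F x = G x) → (∀ x, x ∉ U → F x = 0) →
      (∀ x, x ∉ U → G x = 0) → ∫ x in Ω, F x = ∫ x, G x := by
    intro F G h1 h2 h3
    have hFG : F = G := by
      funext x
      by_cases hx : x ∈ U
      · exact h1 x hx
      · rw [h2 x hx, h3 x hx]
    rw [hFG]
    exact setIntegral_eq_integral_of_forall_compl_eq_zero (fun x hx => h3 x (fun h => hx (hUΩ h)))
  have z1 : ∀ {φ : Euc n → ℝ}, tsupport φ ⊆ U → ∀ x, x ∉ U → φ x = 0 := fun h x hx =>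
    image_eq_zero_of_notMem_tsupport (fun h' => hx (h h'))
  have z2 : ∀ {φ : Euc n → ℝ}, tsupport φ ⊆ U → ∀ x, x ∉ U → gradient φ x = 0 := fun h x hx =>
    aux_grad_zero (fun h' => hx (h h'))
  have core := aux_core (n := n) (U := U) hUo (f := f) (u := w) hf hwd ?_ ?_ (η := η)
    ⟨hη1, hη2, hηU⟩
  · convert core using 1
    · refine swap _ _ (fun x hx => ?_) (fun x hx => ?_) (fun x hx => ?_)
      · simp only [zsq, hgw x hx]
      · simp [z1 hηU x hx]
      · simp [z1 hηU x hx]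
    · refine swap _ _ (fun x hx => ?_) (fun x hx => ?_) (fun x hx => ?_)
      · simp only [zsq, xdu, hgw x hx]
      · simp [z1 hηU x hx, z2 hηU x hx]
      · simp [z1 hηU x hx, z2 hηU x hx]
  · intro φ hφ
    have := hw φ ⟨hφ.1, hφ.2.1, hφ.2.2.trans hUΩ⟩
    rw [swap _ (fun x => ⟪gradient w x, gradient φ x⟫ / √(1 + ‖gradient w x‖ ^ 2))
        (fun x hx => by simp only [hgw x hx]) (fun x hx => by simp [z2 hφ.2.2 x hx])
        (fun x hx => by simp [z2 hφ.2.2 x hx]),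
      swap _ (fun x => f (w x) * φ x) (fun x hx => by simp only [hwu x hx])
        (fun x hx => by simp [z1 hφ.2.2 x hx]) (fun x hx => by simp [z1 hφ.2.2 x hx])] at this
    exact this
  · intro φ hφ
    have := hst φ ⟨hφ.1, hφ.2.1, hφ.2.2.trans hUΩ⟩
    rw [swap _ (fun x => deriv f (w x) * φ x ^ 2) (fun x hx => by simp only [hwu x hx])
        (fun x hx => by simp [z1 hφ.2.2 x hx]) (fun x hx => by simp [z1 hφ.2.2 x hx]),
      swap _ (fun x => ‖gradient φ x‖ ^ 2 / √(1 + ‖gradient w x‖ ^ 2)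
        - ⟪gradient w x, gradient φ x⟫ ^ 2 / (1 + ‖gradient w x‖ ^ 2) ^ ((3:ℝ)/2))
        (fun x hx => by simp only [hgw x hx]) (fun x hx => by simp [z2 hφ.2.2 x hx])
        (fun x hx => by simp [z2 hφ.2.2 x hx])] at this
    exact this
end
end

section
/- Let n ≥ 2 and set a := √(n−1) + 1. Let f ∈ C¹(ℝ) and let u be a W^{3,1}_loc(ℝⁿ) stable solution of div(∇u/√(1+|∇u|²)) = −f(u) in ℝⁿ which is radially symmetric with respect to the origin. Set z := |∇u|². Then there exists a dimensional constant C > 0 such that for all 0 < ρ < R: (1/ρ^{2a}) ∫_{B_ρ} z²/(1+z)^{3/2} dx ≤ (C/R^{2a}) ∫_{B_{2R}∖B_R} z/(1+z)^{3/2} dx. -/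
open MeasureTheory Metric Real Filter Asymptotics Bornology
open scoped RealInnerProductSpace Topology

noncomputable section

lemma aux_rpow_s19 (x : ℝ) (hx : 0 < x) : x ^ ((3:ℝ)/2) = Real.sqrt x ^ 3 := by
  rw [Real.sqrt_eq_rpow, ← Real.rpow_natCast, ← Real.rpow_mul hx.le]
  norm_num

lemma aux_hasFDerivAt_norm {n : ℕ} (x : Euc n) (hx : x ≠ 0) :
    HasFDerivAt (fun y : Euc n => ‖y‖) (‖x‖⁻¹ • innerSL ℝ x) x := by
  have h0 : ‖x‖ ≠ 0 := norm_ne_zero_iff.mpr hx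
  have h1 : HasFDerivAt (fun y : Euc n => ‖y‖ ^ 2) (2 • (innerSL ℝ) x) x :=
    (hasStrictFDerivAt_norm_sq x).hasFDerivAt
  have h2 := h1.sqrt (by positivity)
  have h3 : (fun y : Euc n => Real.sqrt (‖y‖ ^ 2)) = fun y => ‖y‖ := by
    funext y
    exact Real.sqrt_sq (norm_nonneg y)
  rw [h3, Real.sqrt_sq (norm_nonneg x)] at h2
  have h4 : (‖x‖⁻¹ • innerSL ℝ x : Euc n →L[ℝ] ℝ) = (1 / (2 * ‖x‖)) • 2 • (innerSL ℝ) x := by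
    ext y
    simp
    field_simp
  rw [h4]
  exact h2

lemma aux_gradient {n : ℕ} (U : ℝ → ℝ) (d : ℝ) (x : Euc n) (hx : x ≠ 0)
    (hU : HasDerivAt U d ‖x‖) :
    gradient (fun y : Euc n => U ‖y‖) x = (d / ‖x‖) • x := by
  have h1 := hU.comp_hasFDerivAt x (aux_hasFDerivAt_norm x hx)
  have h2 := h1.hasGradientAt.gradient
  have h3 : (U ∘ fun y : Euc n => ‖y‖) = fun y => U ‖y‖ := rfl
  rw [h3] at h2
  rw [h2, LinearIsometryEquiv.symm_apply_eq]
  ext y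
  simp [div_eq_mul_inv]
  ring

lemma aux_testfun {n : ℕ} (ψ : ℝ → ℝ) (α β : ℝ) (hα : 0 < α)
    (hψ : ContDiff ℝ (⊤ : ℕ∞) ψ) (h1 : ∀ r ≤ α, ψ r = 0) (h2 : ∀ r, β ≤ r → ψ r = 0) :
    IsTestFun (Set.univ : Set (Euc n)) (fun x => ψ ‖x‖) := by
  refine ⟨?_, ?_, Set.subset_univ _⟩
  · rw [contDiff_iff_contDiffAt]
    intro x
    by_cases hx : x = 0
    · have : (fun x : Euc n => ψ ‖x‖) =ᶠ[𝓝 x] fun _ => 0 := by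
        subst hx
        filter_upwards [Metric.ball_mem_nhds (0 : Euc n) hα] with y hy
        exact h1 _ (by simpa using (mem_ball_zero_iff.mp hy).le)
      exact contDiffAt_const.congr_of_eventuallyEq this
    · exact hψ.contDiffAt.comp x (contDiffAt_norm ℝ hx)
  · refine HasCompactSupport.intro (isCompact_closedBall (0 : Euc n) β) ?_
    intro x hx
    apply h2
    simp at hx
    exact hx.le

/-- The polar coordinates constant. -/
def cn (n : ℕ) : ℝ := n * (volume : Measure (Euc n)).real (ball 0 1)

lemma cn_pos (n : ℕ) (hn : 2 ≤ n) : 0 < cn n := by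
  unfold cn
  have : 0 < (volume : Measure (Euc n)).real (ball 0 1) := by
    apply ENNReal.toReal_pos
    · exact (measure_ball_pos _ _ one_pos).ne'
    · exact measure_ball_lt_top.ne
  have h2 : (0:ℝ) < n := by positivity
  positivity

lemma aux_polar (n : ℕ) (hn : 2 ≤ n) (H : Euc n → ℝ) (F : ℝ → ℝ)
    (h : ∀ x, x ≠ 0 → H x = F ‖x‖) :
    ∫ x, H x = cn n * ∫ r in Set.Ioi (0:ℝ), r ^ (n-1) * F r := by
  have : Nontrivial (Euc n) := by
    apply Module.nontrivial_of_finrank_pos (R := ℝ)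
    simp; lia
  have h1 : ∫ x, H x = ∫ x : Euc n, F ‖x‖ := by
    apply integral_congr_ae
    have : ∀ᵐ x : Euc n, x ≠ 0 := by
      simp [ae_iff]
    filter_upwards [this] with x hx using h x hx
  rw [h1, integral_fun_norm_addHaar]
  simp [cn]
  ring

lemma aux_Ioi_interval (α β : ℝ) (hα : 0 ≤ α) (hαβ : α ≤ β) (F : ℝ → ℝ)
    (h1 : ∀ r, 0 < r → r ≤ α → F r = 0) (h2 : ∀ r, β < r → F r = 0) :
    ∫ r in Set.Ioi (0:ℝ), F r = ∫ r in α..β, F r := by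
  rw [intervalIntegral.integral_of_le hαβ]
  apply setIntegral_eq_of_subset_of_forall_sdiff_eq_zero measurableSet_Ioi
  · intro r hr
    exact lt_of_le_of_lt hα hr.1
  · intro r hr
    simp at hr
    by_cases h : α < r
    · exact h2 _ (hr.2 h)
    · exact h1 _ hr.1 (not_lt.mp h)

lemma aux_setup {n : ℕ} (hn : 2 ≤ n) (u : Euc n → ℝ) (g : ℝ → ℝ) (hu : ContDiff ℝ 3 u)
    (hg : ∀ x : Euc n, u x = g ‖x‖) :
    ∃ G : ℝ → ℝ, ContDiff ℝ 3 G ∧ u = fun x => G ‖x‖ := by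
  let e : Euc n := EuclideanSpace.single ⟨0, by lia⟩ 1
  have he : ‖e‖ = 1 := by simp [e]
  refine ⟨fun t => u (t • e), ?_, ?_⟩
  · exact hu.comp (contDiff_id.smul contDiff_const)
  · funext x
    change u x = u (‖x‖ • e)
    rw [hg x, hg (‖x‖ • e), norm_smul, he]
    simp

/-- `√(1+w²)`. -/
def Sf (w : ℝ → ℝ) (r : ℝ) : ℝ := Real.sqrt (1 + w r ^ 2)

lemma Sf_pos (w : ℝ → ℝ) (r : ℝ) : 0 < Sf w r := Real.sqrt_pos.mpr (by positivity)

lemma Sf_sq (w : ℝ → ℝ) (r : ℝ) : Sf w r ^ 2 = 1 + w r ^ 2 := Real.sq_sqrt (by positivity)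

lemma Sf_deriv (w w1 : ℝ → ℝ) (r : ℝ) (hw : HasDerivAt w (w1 r) r) :
    HasDerivAt (Sf w) (w r * w1 r / Sf w r) r := by
  have h := ((hw.pow 2).const_add 1).sqrt (by
    have : 0 < 1 + w r ^ 2 := by positivity
    exact this.ne')
  have hS := (Sf_pos w r).ne'
  refine h.congr_deriv ?_
  change _ / (2 * Sf w r) = _
  field_simp
  simp
  ring

lemma Sf_cont (w w1 : ℝ → ℝ) (hw : ∀ r, HasDerivAt w (w1 r) r) : Continuous (Sf w) :=
  continuous_iff_continuousAt.mpr fun r => (Sf_deriv w w1 r (hw r)).continuousAt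

lemma p_deriv (w w1 : ℝ → ℝ) (r : ℝ) (hw : HasDerivAt w (w1 r) r) :
    HasDerivAt (fun r => w r / Sf w r) (w1 r / Sf w r ^ 3) r := by
  have h := hw.div (Sf_deriv w w1 r hw) (Sf_pos w r).ne'
  have hS := (Sf_pos w r).ne'
  refine h.congr_deriv ?_
  have h2 := Sf_sq w r
  field_simp
  rw [h2]
  ring

lemma aux_grad_norm {n : ℕ} (G w : ℝ → ℝ) (hG : ∀ r, HasDerivAt G (w r) r)
    (x : Euc n) (hx : x ≠ 0) : ‖gradient (fun y : Euc n => G ‖y‖) x‖ ^ 2 = w ‖x‖ ^ 2 := by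
  have h0 : ‖x‖ ≠ 0 := norm_ne_zero_iff.mpr hx
  rw [aux_gradient G (w ‖x‖) x hx (hG _), norm_smul, mul_pow, Real.norm_eq_abs, sq_abs]
  field_simp

lemma aux_grad_inner {n : ℕ} (G w H v : ℝ → ℝ) (hG : ∀ r, HasDerivAt G (w r) r)
    (hH : ∀ r, HasDerivAt H (v r) r)
    (x : Euc n) (hx : x ≠ 0) :
    ⟪gradient (fun y : Euc n => G ‖y‖) x, gradient (fun y : Euc n => H ‖y‖) x⟫
      = w ‖x‖ * v ‖x‖ := by
  have h0 : ‖x‖ ≠ 0 := norm_ne_zero_iff.mpr hx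
  rw [aux_gradient G (w ‖x‖) x hx (hG _), aux_gradient H (v ‖x‖) x hx (hH _),
    inner_smul_left, inner_smul_right, real_inner_self_eq_norm_sq]
  simp
  field_simp

lemma aux_supp_deriv (ψ : ℝ → ℝ) (α β : ℝ) (hψ : ContDiff ℝ 1 ψ) (h1 : ∀ r ≤ α, ψ r = 0)
    (h2 : ∀ r, β ≤ r → ψ r = 0) :
    (∀ r ≤ α, deriv ψ r = 0) ∧ (∀ r, β ≤ r → deriv ψ r = 0) := by
  have hd : ∀ r, HasDerivAt ψ (deriv ψ r) r :=
    fun r => (hψ.differentiable one_ne_zero).differentiableAt.hasDerivAt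
  constructor
  · intro r hr
    have a1 : HasDerivWithinAt ψ 0 (Set.Iic r) r :=
      (hasDerivWithinAt_const r _ (0:ℝ)).congr (fun y hy => h1 y (le_trans hy hr)) (h1 r hr)
    exact (uniqueDiffWithinAt_Iic r).eq_deriv _ (hd r).hasDerivWithinAt a1
  · intro r hr
    have a1 : HasDerivWithinAt ψ 0 (Set.Ici r) r :=
      (hasDerivWithinAt_const r _ (0:ℝ)).congr (fun y hy => h2 y (le_trans hr hy)) (h2 r hr)
    exact (uniqueDiffWithinAt_Ici r).eq_deriv _ (hd r).hasDerivWithinAt a1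

lemma weak1D {n : ℕ} (hn : 2 ≤ n) (f G w : ℝ → ℝ) (hG : ∀ r, HasDerivAt G (w r) r)
    (hs : IsWeakSolution (Set.univ : Set (Euc n)) f (fun x => G ‖x‖))
    (ψ : ℝ → ℝ) (α β : ℝ) (hα : 0 < α) (hαβ : α ≤ β)
    (hψ : ContDiff ℝ (⊤ : ℕ∞) ψ) (h1 : ∀ r ≤ α, ψ r = 0) (h2 : ∀ r, β ≤ r → ψ r = 0) :
    ∫ r in α..β, r ^ (n-1) * (w r / Sf w r * deriv ψ r)
      = ∫ r in α..β, r ^ (n-1) * (f (G r) * ψ r) := by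
  have hψ1 : ContDiff ℝ 1 ψ := hψ.of_le (by exact_mod_cast le_top)
  have h := hs.2.2.2 _ (aux_testfun ψ α β hα hψ h1 h2)
  obtain ⟨d1, d2⟩ := aux_supp_deriv ψ α β hψ1 h1 h2
  have hd : ∀ r, HasDerivAt ψ (deriv ψ r) r :=
    fun r => (hψ1.differentiable one_ne_zero).differentiableAt.hasDerivAt
  simp only [Measure.restrict_univ] at h
  rw [aux_polar n hn _ (fun r => w r / Sf w r * deriv ψ r), 
    aux_polar n hn _ (fun r => f (G r) * ψ r)] at h
  · have h' := mul_left_cancel₀ (cn_pos n hn).ne' h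
    rw [aux_Ioi_interval α β hα.le hαβ, aux_Ioi_interval α β hα.le hαβ] at h'
    · exact h'
    · intro r _ hr; simp [h1 r hr]
    · intro r hr; simp [h2 r hr.le]
    · intro r _ hr; simp [d1 r hr]
    · intro r hr; simp [d2 r hr.le]
  · intro x hx; rfl
  · intro x hx
    rw [aux_grad_inner G w ψ (deriv ψ) hG hd x hx, aux_grad_norm G w hG x hx]
    simp only [Sf]
    ring

lemma stab1D {n : ℕ} (hn : 2 ≤ n) (f G w : ℝ → ℝ) (hG : ∀ r, HasDerivAt G (w r) r)
    (hs : IsStableSolution (Set.univ : Set (Euc n)) f (fun x => G ‖x‖))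
    (ψ : ℝ → ℝ) (α β : ℝ) (hα : 0 < α) (hαβ : α ≤ β)
    (hψ : ContDiff ℝ (⊤ : ℕ∞) ψ) (h1 : ∀ r ≤ α, ψ r = 0) (h2 : ∀ r, β ≤ r → ψ r = 0) :
    ∫ r in α..β, r ^ (n-1) * (deriv f (G r) * ψ r ^ 2)
      ≤ ∫ r in α..β, r ^ (n-1) * (deriv ψ r ^ 2 / Sf w r ^ 3) := by
  have hψ1 : ContDiff ℝ 1 ψ := hψ.of_le (by exact_mod_cast le_top)
  have h := hs.2.2 _ (aux_testfun ψ α β hα hψ h1 h2)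
  obtain ⟨d1, d2⟩ := aux_supp_deriv ψ α β hψ1 h1 h2
  have hd : ∀ r, HasDerivAt ψ (deriv ψ r) r :=
    fun r => (hψ1.differentiable one_ne_zero).differentiableAt.hasDerivAt
  simp only [Measure.restrict_univ] at h
  rw [aux_polar n hn _ (fun r => deriv f (G r) * ψ r ^ 2), 
    aux_polar n hn _ (fun r => deriv ψ r ^ 2 / Sf w r ^ 3)] at h
  · have h' := le_of_mul_le_mul_left h (cn_pos n hn)
    rw [aux_Ioi_interval α β hα.le hαβ, aux_Ioi_interval α β hα.le hαβ] at h'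
    · exact h'
    · intro r _ hr; simp [d1 r hr]
    · intro r hr; simp [d2 r hr.le]
    · intro r _ hr; simp [h1 r hr]
    · intro r hr; simp [h2 r hr.le]
  · intro x hx
    rw [aux_grad_inner G w ψ (deriv ψ) hG hd x hx, aux_grad_norm G w hG x hx,
      aux_grad_norm ψ (deriv ψ) hd x hx, aux_rpow_s19 _ (by positivity)]
    change _ / Sf w ‖x‖ - _ / Sf w ‖x‖ ^ 3 = _
    have hS := (Sf_pos w ‖x‖).ne'
    have h2 := Sf_sq w ‖x‖
    field_simp
    rw [h2]
    ring
  · intro x hx; rfl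

lemma ode1D {n : ℕ} (hn : 2 ≤ n) (f G w w1 : ℝ → ℝ) (hf : Continuous f)
    (hG : ∀ r, HasDerivAt G (w r) r) (hw : ∀ r, HasDerivAt w (w1 r) r) (hw1 : Continuous w1)
    (hs : IsWeakSolution (Set.univ : Set (Euc n)) f (fun x => G ‖x‖)) :
    ∀ r, 0 < r → f (G r) = -(w1 r / Sf w r ^ 3 + (n - 1 : ℝ) / r * (w r / Sf w r)) := by
  have cG : Continuous G := continuous_iff_continuousAt.mpr fun r => (hG r).continuousAt
  have cw : Continuous w := continuous_iff_continuousAt.mpr fun r => (hw r).continuousAt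
  have cS := Sf_cont w w1 hw
  have hSn : ∀ r, Sf w r ≠ 0 := fun r => (Sf_pos w r).ne'
  have hq : ∀ r, HasDerivAt (fun r => r ^ (n-1) * (w r / Sf w r))
      (((n-1 : ℕ):ℝ) * r ^ (n-1-1) * (w r / Sf w r) + r ^ (n-1) * (w1 r / Sf w r ^ 3)) r := by
    intro r
    exact (hasDerivAt_pow (n-1) r).mul (p_deriv w w1 r (hw r))
  have cq : Continuous (fun r =>
      (((n-1 : ℕ):ℝ) * r ^ (n-1-1) * (w r / Sf w r) + r ^ (n-1) * (w1 r / Sf w r ^ 3))) := by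
    fun_prop (disch := intro r; exact pow_ne_zero _ (hSn r))
  set Q : ℝ → ℝ := fun r =>
      (((n-1 : ℕ):ℝ) * r ^ (n-1-1) * (w r / Sf w r) + r ^ (n-1) * (w1 r / Sf w r ^ 3)) with hQ
  have cF : Continuous (fun r => Q r + r ^ (n-1) * f (G r)) := by fun_prop
  have key : ∀ᵐ r : ℝ, r ∈ Set.Ioi (0:ℝ) → Q r + r ^ (n-1) * f (G r) = 0 := by
    apply isOpen_Ioi.ae_eq_zero_of_integral_contDiff_smul_eq_zero
    · exact cF.locallyIntegrable.locallyIntegrableOn _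
    · intro ψ hψ hc hsup
      by_cases hne : (tsupport ψ).Nonempty
      · obtain ⟨a, ha, ha'⟩ := (show IsCompact (tsupport ψ) from hc).exists_isLeast hne
        obtain ⟨b, hb, hb'⟩ := (show IsCompact (tsupport ψ) from hc).exists_isGreatest hne
        have ha0 : 0 < a := hsup ha
        have hab : a ≤ b := ha' hb
        have z1 : ∀ r ≤ a / 2, ψ r = 0 := by
          intro r hr
          apply image_eq_zero_of_notMem_tsupport
          intro h
          have := ha' h
          linarith
        have z2 : ∀ r, b + 1 ≤ r → ψ r = 0 := by
          intro r hr
          apply image_eq_zero_of_notMem_tsupport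
          intro h
          have := hb' h
          linarith
        have hw0 := weak1D hn f G w hG hs ψ (a/2) (b+1) (by linarith) (by linarith) hψ z1 z2
        have hψ1 : ContDiff ℝ 1 ψ := hψ.of_le (by exact_mod_cast le_top)
        have hd : ∀ r, HasDerivAt ψ (deriv ψ r) r :=
          fun r => (hψ1.differentiable one_ne_zero).differentiableAt.hasDerivAt
        have cd : Continuous (deriv ψ) := hψ1.continuous_deriv le_rfl
        have cψ := hψ1.continuous
        have ibp := intervalIntegral.integral_mul_deriv_eq_deriv_mul (a := a/2) (b := b+1)
          (fun r _ => hq r) (fun r _ => hd r) (cq.intervalIntegrable _ _)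
          (cd.intervalIntegrable _ _)
        have e1 : ∫ r, ψ r • (Q r + r ^ (n-1) * f (G r))
            = ∫ r in (a/2)..(b+1), ψ r • (Q r + r ^ (n-1) * f (G r)) := by
          rw [intervalIntegral.integral_of_le (by linarith), ← integral_indicator measurableSet_Ioc]
          congr 1
          funext r
          rw [Set.indicator_apply]
          split_ifs with hr
          · rfl
          · simp only [Set.mem_Ioc, not_and_or, not_lt, not_le] at hr
            rcases hr with hr | hr
            · simp [z1 r hr]
            · simp [z2 r hr.le]
        have e2 : ∫ r in (a/2)..(b+1), ψ r • (Q r + r ^ (n-1) * f (G r))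
            = (∫ r in (a/2)..(b+1), Q r * ψ r) 
              + ∫ r in (a/2)..(b+1), r ^ (n-1) * (f (G r) * ψ r) := by
          rw [← intervalIntegral.integral_add]
          · congr 1
            funext r
            simp only [smul_eq_mul]
            ring
          · exact Continuous.intervalIntegrable (by fun_prop) _ _
          · exact Continuous.intervalIntegrable (by fun_prop) _ _
        rw [e1, e2, ← hw0]
        rw [z1 _ le_rfl, z2 _ le_rfl] at ibp
        simp only [mul_assoc] at ibp ⊢
        simp only [hQ, mul_assoc]
        linarith
      · have : ∀ r, ψ r = 0 := by
          intro r
          apply image_eq_zero_of_notMem_tsupport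
          intro h
          exact hne ⟨r, h⟩
        simp [this]
  have key2 := Measure.eqOn_open_of_ae_eq (μ := volume) (U := Set.Ioi (0:ℝ))
    (f := fun r => Q r + r ^ (n-1) * f (G r)) (g := fun _ => 0)
    ((ae_restrict_iff' measurableSet_Ioi).mpr key) isOpen_Ioi cF.continuousOn continuousOn_const
  intro r hr
  have h := key2 hr
  simp only [hQ] at h
  obtain ⟨m, rfl⟩ : ∃ m, n = m + 2 := ⟨n - 2, by lia⟩
  simp only [show m + 2 - 1 = m + 1 from rfl, show m + 1 - 1 = m from rfl] at h
  push_cast at h ⊢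
  have hr' : r ^ m ≠ 0 := by positivity
  have h3 : r ^ m * (((m:ℝ)+1) * (w r / Sf w r) + r * (w1 r / Sf w r ^ 3) + r * f (G r)) = 0 := by
    rw [← h]; ring
  have h4 := (mul_eq_zero.mp h3).resolve_left hr'
  have h5 : f (G r) = -(((m:ℝ)+1) * (w r / Sf w r) + r * (w1 r / Sf w r ^ 3)) / r := by
    field_simp
    field_simp at h4
    linarith
  rw [h5]
  have := hSn r
  field_simp
  ring

lemma approx1D {n : ℕ} (hn : 2 ≤ n) (f G w w1 : ℝ → ℝ) (hf : ContDiff ℝ 1 f)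
    (hG : ∀ r, HasDerivAt G (w r) r) (hw : ∀ r, HasDerivAt w (w1 r) r) (hw1 : Continuous w1)
    (hs : IsStableSolution (Set.univ : Set (Euc n)) f (fun x => G ‖x‖))
    (η : ℝ → ℝ) (α β : ℝ) (hα : 0 < α) (hαβ : α ≤ β)
    (hη : ContDiff ℝ (⊤ : ℕ∞) η) (h1 : ∀ r ≤ α, η r = 0) (h2 : ∀ r, β ≤ r → η r = 0) :
    ∫ r in α..β, r ^ (n-1) * (deriv f (G r) * (w r * η r) ^ 2)
      ≤ ∫ r in α..β, r ^ (n-1) * ((w1 r * η r + w r * deriv η r) ^ 2 / Sf w r ^ 3) := by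
  have cG : Continuous G := continuous_iff_continuousAt.mpr fun r => (hG r).continuousAt
  have cw : Continuous w := continuous_iff_continuousAt.mpr fun r => (hw r).continuousAt
  have cS := Sf_cont w w1 hw
  have hSn : ∀ r, Sf w r ≠ 0 := fun r => (Sf_pos w r).ne'
  have cf' : Continuous (deriv f) := hf.continuous_deriv le_rfl
  have hη1 : ContDiff ℝ 1 η := hη.of_le (by exact_mod_cast le_top)
  have hd : ∀ r, HasDerivAt η (deriv η r) r :=
    fun r => (hη1.differentiable one_ne_zero).differentiableAt.hasDerivAt
  have cd : Continuous (deriv η) := hη1.continuous_deriv le_rfl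
  have cη := hη1.continuous
  have hpoly : ∀ k : ℕ, ∃ p : Polynomial ℝ, ∀ x ∈ Set.Icc α β,
      |p.eval x - w1 x| < 1 / ((k:ℝ) + 1) := fun k =>
    exists_polynomial_near_of_continuousOn α β w1 hw1.continuousOn _ (by positivity)
  choose p hp using hpoly
  let V : ℕ → ℝ → ℝ := fun k r => w α + ∫ t in α..r, (p k).eval t
  have hV : ∀ k r, HasDerivAt (V k) ((p k).eval r) r := by
    intro k r
    have hc : Continuous (fun t => (p k).eval t) := (p k).continuous
    exact (intervalIntegral.integral_hasDerivAt_right (hc.intervalIntegrable _ _)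
      hc.aestronglyMeasurable.stronglyMeasurableAtFilter hc.continuousAt).const_add _
  have hVs : ∀ k, ContDiff ℝ (⊤ : ℕ∞) (V k) := by
    intro k
    rw [contDiff_infty_iff_deriv]
    refine ⟨fun r => (hV k r).differentiableAt, ?_⟩
    have : deriv (V k) = fun r => (p k).eval r := funext fun r => (hV k r).deriv
    rw [this]
    simpa using (p k).contDiff_aeval (𝕜 := ℝ) (⊤ : ℕ∞)
  have hVw : ∀ k, ∀ r ∈ Set.Icc α β, |V k r - w r| ≤ (β - α) / ((k:ℝ) + 1) := by
    intro k r hr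
    have hb : ∀ x ∈ Set.Icc α β, ‖(p k).eval x - w1 x‖ ≤ 1 / ((k:ℝ)+1) :=
      fun x hx => (hp k x hx).le
    have := (convex_Icc α β).norm_image_sub_le_of_norm_hasDerivWithin_le
      (f := fun r => V k r - w r) (f' := fun r => (p k).eval r - w1 r)
      (fun x _ => ((hV k x).sub (hw x)).hasDerivWithinAt) hb
      (Set.left_mem_Icc.mpr hαβ) hr
    simp only [V, intervalIntegral.integral_same, Real.norm_eq_abs] at this
    simp only [V]
    rw [add_zero, sub_self, sub_zero, abs_of_nonneg (a := r - α) (by linarith [hr.1])] at this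
    refine this.trans ?_
    rw [div_mul_eq_mul_div, one_mul]
    gcongr
    exact hr.2
  have t1 : Tendsto (fun k : ℕ => 1 / ((k:ℝ) + 1)) atTop (𝓝 0) :=
    tendsto_one_div_add_atTop_nhds_zero_nat
  have t2 : Tendsto (fun k : ℕ => (β - α) / ((k:ℝ) + 1)) atTop (𝓝 0) := by
    have := t1.const_mul (β - α)
    simpa [div_eq_mul_inv] using this
  have l1 : ∀ r ∈ Set.Icc α β, Tendsto (fun k => (p k).eval r) atTop (𝓝 (w1 r)) := by
    intro r hr
    rw [tendsto_iff_norm_sub_tendsto_zero]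
    exact squeeze_zero (fun _ => norm_nonneg _) (fun k => (hp k r hr).le) t1
  have l2 : ∀ r ∈ Set.Icc α β, Tendsto (fun k => V k r) atTop (𝓝 (w r)) := by
    intro r hr
    rw [tendsto_iff_norm_sub_tendsto_zero]
    exact squeeze_zero (fun _ => norm_nonneg _) (fun k => hVw k r hr) t2
  have hk1 : ∀ k : ℕ, 1 / ((k:ℝ) + 1) ≤ 1 := by
    intro k
    rw [div_le_one (by positivity)]
    have : (0:ℝ) ≤ k := by positivity
    linarith
  have b1 : ∀ k, ∀ r ∈ Set.Icc α β, |(p k).eval r| ≤ |w1 r| + 1 := by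
    intro k r hr
    have := abs_sub_abs_le_abs_sub ((p k).eval r) (w1 r)
    linarith [(hp k r hr).le, hk1 k]
  have b2 : ∀ k, ∀ r ∈ Set.Icc α β, |V k r| ≤ |w r| + (β - α) := by
    intro k r hr
    have := abs_sub_abs_le_abs_sub (V k r) (w r)
    have h3 : (β - α) / ((k:ℝ) + 1) ≤ β - α := by
      have := mul_le_mul_of_nonneg_left (hk1 k) (sub_nonneg.mpr hαβ)
      rw [mul_one_div, mul_one] at this
      exact this
    linarith [hVw k r hr]
  have hsub : ∀ r ∈ Set.uIoc α β, r ∈ Set.Icc α β := by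
    intro r hr
    rw [Set.uIoc_of_le hαβ] at hr
    exact ⟨hr.1.le, hr.2⟩
  have cV : ∀ k, Continuous (V k) := fun k => (hVs k).continuous
  have cp : ∀ k, Continuous (fun r => (p k).eval r) := fun k => (p k).continuous
  have T1 : Tendsto (fun k => ∫ r in α..β, r ^ (n-1) * (deriv f (G r) * (V k r * η r) ^ 2)) atTop
      (𝓝 (∫ r in α..β, r ^ (n-1) * (deriv f (G r) * (w r * η r) ^ 2))) := by
    apply intervalIntegral.tendsto_integral_filter_of_dominated_convergence
      (fun r => |r ^ (n-1)| * (|deriv f (G r)| * ((|w r| + (β - α)) * |η r|) ^ 2))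
    · refine Eventually.of_forall fun k => Continuous.aestronglyMeasurable ?_
      have := cV k
      fun_prop
    · refine Eventually.of_forall fun k => Eventually.of_forall fun r hr => ?_
      rw [Real.norm_eq_abs, abs_mul, abs_mul, abs_pow (V k r * η r), abs_mul (V k r)]
      gcongr
      exact b2 k r (hsub r hr)
    · exact Continuous.intervalIntegrable (by fun_prop) _ _
    · refine Eventually.of_forall fun r hr => ?_
      exact ((((l2 r (hsub r hr)).mul_const _).pow 2).const_mul _).const_mul _
  have T2 : Tendsto (fun k => ∫ r in α..β,
      r ^ (n-1) * (((p k).eval r * η r + V k r * deriv η r) ^ 2 / Sf w r ^ 3)) atTop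
      (𝓝 (∫ r in α..β, r ^ (n-1) * ((w1 r * η r + w r * deriv η r) ^ 2 / Sf w r ^ 3))) := by
    apply intervalIntegral.tendsto_integral_filter_of_dominated_convergence
      (fun r => |r ^ (n-1)| * (((|w1 r| + 1) * |η r| + (|w r| + (β - α)) * |deriv η r|) ^ 2
        / Sf w r ^ 3))
    · refine Eventually.of_forall fun k => Continuous.aestronglyMeasurable ?_
      have := cV k
      have := cp k
      fun_prop (disch := intro r; exact pow_ne_zero _ (hSn r))
    · refine Eventually.of_forall fun k => Eventually.of_forall fun r hr => ?_
      have hS3 : 0 < Sf w r ^ 3 := pow_pos (Sf_pos w r) 3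
      rw [Real.norm_eq_abs, abs_mul, abs_div, abs_pow (_ + _), abs_of_pos hS3]
      gcongr
      refine (abs_add_le _ _).trans ?_
      rw [abs_mul, abs_mul]
      gcongr
      · exact b1 k r (hsub r hr)
      · exact b2 k r (hsub r hr)
    · exact Continuous.intervalIntegrable
        (by fun_prop (disch := intro r; exact pow_ne_zero _ (hSn r))) _ _
    · refine Eventually.of_forall fun r hr => ?_
      exact ((((((l1 r (hsub r hr)).mul_const _).add ((l2 r (hsub r hr)).mul_const _)).pow 2)).div_const _).const_mul _
  refine le_of_tendsto_of_tendsto' T1 T2 fun k => ?_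
  have h := stab1D hn f G w hG hs (fun r => V k r * η r) α β hα hαβ ((hVs k).mul hη)
    (fun r hr => by simp [h1 r hr]) (fun r hr => by simp [h2 r hr])
  have hder : ∀ r, deriv (fun r => V k r * η r) r = (p k).eval r * η r + V k r * deriv η r :=
    fun r => ((hV k r).mul (hd r)).deriv
  simpa only [hder] using h

lemma ineq1D {n : ℕ} (hn : 2 ≤ n) (f G w w1 : ℝ → ℝ) (hf : ContDiff ℝ 1 f)
    (hG : ∀ r, HasDerivAt G (w r) r) (hw : ∀ r, HasDerivAt w (w1 r) r) (hw1 : ContDiff ℝ 1 w1)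
    (hs : IsStableSolution (Set.univ : Set (Euc n)) f (fun x => G ‖x‖))
    (η : ℝ → ℝ) (α β : ℝ) (hα : 0 < α) (hαβ : α ≤ β)
    (hη : ContDiff ℝ (⊤ : ℕ∞) η) (h1 : ∀ r ≤ α, η r = 0) (h2 : ∀ r, β ≤ r → η r = 0) :
    ∫ r in α..β, (n - 1 : ℝ) * (r ^ (n-1) / r ^ 2 * (w r ^ 2 / Sf w r * η r ^ 2))
      ≤ ∫ r in α..β, r ^ (n-1) * (w r ^ 2 * deriv η r ^ 2 / Sf w r ^ 3) := by
  have cG : Continuous G := continuous_iff_continuousAt.mpr fun r => (hG r).continuousAt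
  have cw : Continuous w := continuous_iff_continuousAt.mpr fun r => (hw r).continuousAt
  have cw1 : Continuous w1 := hw1.continuous
  have cS := Sf_cont w w1 hw
  have hSn : ∀ r, Sf w r ≠ 0 := fun r => (Sf_pos w r).ne'
  have cf' : Continuous (deriv f) := hf.continuous_deriv le_rfl
  have hη1 : ContDiff ℝ 1 η := hη.of_le (by exact_mod_cast le_top)
  have hd : ∀ r, HasDerivAt η (deriv η r) r :=
    fun r => (hη1.differentiable one_ne_zero).differentiableAt.hasDerivAt
  have cd : Continuous (deriv η) := hη1.continuous_deriv le_rfl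
  have cη := hη1.continuous
  have cw2 : Continuous (deriv w1) := hw1.continuous_deriv le_rfl
  have hdw1 : ∀ r, HasDerivAt w1 (deriv w1 r) r :=
    fun r => (hw1.differentiable one_ne_zero).differentiableAt.hasDerivAt
  obtain ⟨P2, cP2, hP2⟩ : ∃ P2 : ℝ → ℝ, Continuous P2 ∧
      ∀ r, HasDerivAt (fun r => w1 r / Sf w r ^ 3) (P2 r) r := by
    refine ⟨fun r => (deriv w1 r * Sf w r ^ 3 - w1 r * (((3:ℕ):ℝ) * Sf w r ^ 2 *
      (w r * w1 r / Sf w r))) / (Sf w r ^ 3) ^ 2, ?_, fun r => ?_⟩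
    · have : ∀ r, (Sf w r ^ 3) ^ 2 ≠ 0 := fun r => pow_ne_zero _ (pow_ne_zero _ (hSn r))
      fun_prop (disch := assumption)
    · exact (hdw1 r).div ((Sf_deriv w w1 r (hw r)).pow 3) (pow_ne_zero _ (hSn r))
  have hode := ode1D hn f G w w1 hf.continuous hG hw cw1 hs.1
  have hode2 : ∀ r, 0 < r → deriv f (G r) * w r = -(P2 r + (n - 1 : ℝ) *
      (w1 r / Sf w r ^ 3 / r - w r / Sf w r / r ^ 2)) := by
    intro r hr
    have a1 : HasDerivAt (fun r => f (G r)) (deriv f (G r) * w r) r :=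
      ((hf.differentiable one_ne_zero).differentiableAt.hasDerivAt).comp r (hG r)
    have a2 : HasDerivAt (fun r => -(w1 r / Sf w r ^ 3 + (n - 1 : ℝ) / r * (w r / Sf w r)))
        (-(P2 r + (-(n - 1 : ℝ) / r ^ 2 * (w r / Sf w r) + (n - 1 : ℝ) / r *
          (w1 r / Sf w r ^ 3)))) r := by
      refine ((hP2 r).add (HasDerivAt.mul ?_ (p_deriv w w1 r (hw r)))).neg
      have := (hasDerivAt_inv hr.ne').const_mul (n - 1 : ℝ)
      refine (this.congr_deriv ?_)
      ring
    have a3 : (fun r => f (G r)) =ᶠ[𝓝 r]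
        (fun r => -(w1 r / Sf w r ^ 3 + (n - 1 : ℝ) / r * (w r / Sf w r))) := by
      filter_upwards [lt_mem_nhds hr] with y hy using hode y hy
    rw [a1.unique (a2.congr_of_eventuallyEq a3)]
    ring
  have hst := approx1D hn f G w w1 hf hG hw cw1 hs η α β hα hαβ hη h1 h2
  have hT : ∀ r, HasDerivAt (fun r => r ^ (n-1) * (w1 r / Sf w r ^ 3) * (w r * η r ^ 2))
      ((((n-1:ℕ):ℝ) * r ^ (n-1-1) * (w1 r / Sf w r ^ 3) + r ^ (n-1) * P2 r) * (w r * η r ^ 2)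
        + r ^ (n-1) * (w1 r / Sf w r ^ 3) * (w1 r * η r ^ 2 + w r * (((2:ℕ):ℝ) * η r ^ (2-1) * deriv η r)))
      r := by
    intro r
    exact ((hasDerivAt_pow (n-1) r).mul (hP2 r)).mul ((hw r).mul ((hd r).pow 2))
  have hS3 : ∀ r, Sf w r ^ 3 ≠ 0 := fun r => pow_ne_zero _ (hSn r)
  have cT : Continuous (fun r => 
      ((((n-1:ℕ):ℝ) * r ^ (n-1-1) * (w1 r / Sf w r ^ 3) + r ^ (n-1) * P2 r) * (w r * η r ^ 2)
        + r ^ (n-1) * (w1 r / Sf w r ^ 3) * (w1 r * η r ^ 2 + w r * (((2:ℕ):ℝ) * η r ^ (2-1) * deriv η r)))) := by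
    fun_prop (disch := assumption)
  have hT0 := intervalIntegral.integral_eq_sub_of_hasDerivAt (a := α) (b := β)
    (fun r _ => hT r) (cT.intervalIntegrable _ _)
  simp only [h1 α le_rfl, h2 β le_rfl] at hT0
  have i1 : IntervalIntegrable (fun r => r ^ (n-1) * (deriv f (G r) * (w r * η r) ^ 2))
      volume α β := Continuous.intervalIntegrable (by fun_prop) _ _
  have i2 : IntervalIntegrable (fun r => r ^ (n-1) *
      ((w1 r * η r + w r * deriv η r) ^ 2 / Sf w r ^ 3))
      volume α β := Continuous.intervalIntegrable (by fun_prop (disch := assumption)) _ _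
  have i3 : IntervalIntegrable (fun r => r ^ (n-1) * (w r ^ 2 * deriv η r ^ 2 / Sf w r ^ 3))
      volume α β := Continuous.intervalIntegrable (by fun_prop (disch := assumption)) _ _
  have i4 : IntervalIntegrable (fun r => (n - 1 : ℝ) * (r ^ (n-1) / r ^ 2 *
      (w r ^ 2 / Sf w r * η r ^ 2))) volume α β := by
    apply ContinuousOn.intervalIntegrable
    rw [Set.uIcc_of_le hαβ]
    have : ∀ r ∈ Set.Icc α β, r ^ 2 ≠ 0 := fun r hr => pow_ne_zero _ (hα.trans_le hr.1).ne'
    have a1 : ContinuousOn (fun r : ℝ => r ^ (n-1) / r ^ 2) (Set.Icc α β) :=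
      ContinuousOn.div (by fun_prop) (by fun_prop) this
    have a2 : Continuous (fun r => w r ^ 2 / Sf w r * η r ^ 2) := by
      fun_prop (disch := assumption)
    exact continuousOn_const.mul (a1.mul a2.continuousOn)
  have i5 := cT.intervalIntegrable (μ := volume) α β
  have hid : ∫ r in α..β, (r ^ (n-1) * ((w1 r * η r + w r * deriv η r) ^ 2 / Sf w r ^ 3)
        - r ^ (n-1) * (deriv f (G r) * (w r * η r) ^ 2))
      = ∫ r in α..β, ((r ^ (n-1) * (w r ^ 2 * deriv η r ^ 2 / Sf w r ^ 3)
        - (n - 1 : ℝ) * (r ^ (n-1) / r ^ 2 * (w r ^ 2 / Sf w r * η r ^ 2)))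
        + ((((n-1:ℕ):ℝ) * r ^ (n-1-1) * (w1 r / Sf w r ^ 3) + r ^ (n-1) * P2 r) * (w r * η r ^ 2)
        + r ^ (n-1) * (w1 r / Sf w r ^ 3) * (w1 r * η r ^ 2 + w r * (((2:ℕ):ℝ) * η r ^ (2-1) * deriv η r)))) := by
    apply intervalIntegral.integral_congr
    intro r hr
    rw [Set.uIcc_of_le hαβ] at hr
    have hr0 : 0 < r := hα.trans_le hr.1
    have h3 := hode2 r hr0
    have e : deriv f (G r) * (w r * η r) ^ 2 = (deriv f (G r) * w r) * (w r * η r ^ 2) := by ring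
    simp only [e, h3]
    have := hSn r
    obtain ⟨m, rfl⟩ : ∃ m, n = m + 2 := ⟨n - 2, by lia⟩
    simp only [show m + 2 - 1 = m + 1 from rfl, show m + 1 - 1 = m from rfl]
    push_cast
    field_simp
    ring
  rw [intervalIntegral.integral_sub i2 i1, intervalIntegral.integral_add (i3.sub i4) i5,
    intervalIntegral.integral_sub i3 i4, hT0] at hid
  simp only [ne_eq, OfNat.ofNat_ne_zero, not_false_eq_true, zero_pow, mul_zero, sub_self, add_zero] at hid
  linarith

lemma st_hasDeriv (x : ℝ) : HasDerivAt Real.smoothTransition (deriv Real.smoothTransition x) x :=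
  ((Real.smoothTransition.contDiff (n := 1)).differentiable one_ne_zero).differentiableAt.hasDerivAt

lemma st_cont : Continuous (deriv Real.smoothTransition) :=
  (Real.smoothTransition.contDiff (n := 1)).continuous_deriv le_rfl

lemma st_deriv_right (x : ℝ) (hx : 1 ≤ x) : deriv Real.smoothTransition x = 0 := by
  have a1 : HasDerivWithinAt Real.smoothTransition 0 (Set.Ici x) x :=
    (hasDerivWithinAt_const x _ (1:ℝ)).congr
      (fun y hy => Real.smoothTransition.one_of_one_le (le_trans hx hy))
      (Real.smoothTransition.one_of_one_le hx)
  exact (uniqueDiffWithinAt_Ici x).eq_deriv _ (st_hasDeriv x).hasDerivWithinAt a1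

lemma st_deriv_left (x : ℝ) (hx : x ≤ 0) : deriv Real.smoothTransition x = 0 := by
  have a1 : HasDerivWithinAt Real.smoothTransition 0 (Set.Iic x) x :=
    (hasDerivWithinAt_const x _ (0:ℝ)).congr
      (fun y hy => Real.smoothTransition.zero_of_nonpos (le_trans hy hx))
      (Real.smoothTransition.zero_of_nonpos hx)
  exact (uniqueDiffWithinAt_Iic x).eq_deriv _ (st_hasDeriv x).hasDerivWithinAt a1

lemma st_bound : ∃ M : ℝ, 0 ≤ M ∧ ∀ x, |deriv Real.smoothTransition x| ≤ M := by
  obtain ⟨M, hM⟩ := isCompact_Icc.exists_bound_of_continuousOn (s := Set.Icc (0:ℝ) 1)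
    st_cont.continuousOn
  have h0 : 0 ≤ M := (norm_nonneg _).trans (hM 0 (by simp))
  refine ⟨M, h0, fun x => ?_⟩
  by_cases h1 : x ≤ 0
  · simpa [st_deriv_left x h1] using h0
  · by_cases h2 : 1 ≤ x
    · simpa [st_deriv_right x h2] using h0
    · exact hM x ⟨by linarith, by linarith⟩

lemma limit1D {n : ℕ} (hn : 2 ≤ n) (f G w w1 : ℝ → ℝ) (hf : ContDiff ℝ 1 f)
    (hG : ∀ r, HasDerivAt G (w r) r) (hw : ∀ r, HasDerivAt w (w1 r) r) (hw1 : ContDiff ℝ 1 w1)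
    (hs : IsStableSolution (Set.univ : Set (Euc n)) f (fun x => G ‖x‖))
    (h : ℝ → ℝ) (β : ℝ) (hβ : 0 < β)
    (hh : ContDiff ℝ (⊤ : ℕ∞) h) (h2 : ∀ r, β ≤ r → h r = 0) :
    ∫ r in (0:ℝ)..β, (n - 1 : ℝ) * (r ^ (n-1) * (w r ^ 2 / Sf w r * h r ^ 2))
      ≤ ∫ r in (0:ℝ)..β, r ^ (n-1) * (w r ^ 2 * (h r + r * deriv h r) ^ 2 / Sf w r ^ 3) := by
  have cw : Continuous w := continuous_iff_continuousAt.mpr fun r => (hw r).continuousAt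
  have cS := Sf_cont w w1 hw
  have hSn : ∀ r, Sf w r ≠ 0 := fun r => (Sf_pos w r).ne'
  have hS3 : ∀ r, Sf w r ^ 3 ≠ 0 := fun r => pow_ne_zero _ (hSn r)
  have hh1 : ContDiff ℝ 1 h := hh.of_le (by exact_mod_cast le_top)
  have hd : ∀ r, HasDerivAt h (deriv h r) r :=
    fun r => (hh1.differentiable one_ne_zero).differentiableAt.hasDerivAt
  have cd : Continuous (deriv h) := hh1.continuous_deriv le_rfl
  have ch := hh1.continuous
  obtain ⟨M, hM0, hM⟩ := st_bound
  have cst := Real.smoothTransition.continuous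
  have cst' := st_cont
  let c : ℕ → ℝ := fun k => ((k:ℝ) + 1) / β
  have hc : ∀ k, 0 < c k := fun k => by simp only [c]; positivity
  let ζ : ℕ → ℝ → ℝ := fun k r => Real.smoothTransition (c k * r - 1)
  let ζ' : ℕ → ℝ → ℝ := fun k r => deriv Real.smoothTransition (c k * r - 1) * c k
  have hζ : ∀ k r, HasDerivAt (ζ k) (ζ' k r) r := by
    intro k r
    have a : HasDerivAt (fun r => c k * r - 1) (c k) r := by
      simpa using ((hasDerivAt_id r).const_mul (c k)).sub_const 1
    exact (st_hasDeriv (c k * r - 1)).comp r a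
  have cζ : ∀ k, Continuous (ζ k) := fun k => by simp only [ζ]; fun_prop
  have cζ' : ∀ k, Continuous (ζ' k) := fun k => by simp only [ζ']; fun_prop
  have hζ0 : ∀ k r, r ≤ 1 / c k → ζ k r = 0 := by
    intro k r hr
    apply Real.smoothTransition.zero_of_nonpos
    rw [le_div_iff₀ (hc k)] at hr
    linarith
  have hζ'0 : ∀ k r, r ≤ 1 / c k → ζ' k r = 0 := by
    intro k r hr
    simp only [ζ']
    rw [st_deriv_left, zero_mul]
    rw [le_div_iff₀ (hc k)] at hr
    linarith
  have hζb : ∀ k r, |ζ k r| ≤ 1 := by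
    intro k r
    rw [abs_of_nonneg (Real.smoothTransition.nonneg _)]
    exact Real.smoothTransition.le_one _
  have hζ'b : ∀ k r, 0 ≤ r → |r * ζ' k r| ≤ 2 * M := by
    intro k r hr
    by_cases h1 : 1 ≤ c k * r - 1
    · simp only [ζ']
      rw [st_deriv_right _ h1]
      simpa using hM0
    · push Not at h1
      have e : r * ζ' k r = (c k * r) * deriv Real.smoothTransition (c k * r - 1) := by
        simp only [ζ']; ring
      rw [e, abs_mul, abs_of_nonneg (mul_nonneg (hc k).le hr)]
      exact mul_le_mul (by linarith) (hM _) (abs_nonneg _) (by norm_num)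
  have hev : ∀ r, 0 < r → ∀ᶠ k in atTop, ζ k r = 1 ∧ ζ' k r = 0 := by
    intro r hr
    have t : Tendsto (fun k : ℕ => (k:ℝ)) atTop atTop := tendsto_natCast_atTop_atTop
    filter_upwards [t.eventually_ge_atTop (2 * β / r)] with k hk
    have h1 : 1 ≤ c k * r - 1 := by
      simp only [c]
      rw [div_le_iff₀ hr] at hk
      have : 2 ≤ ((k:ℝ) + 1) / β * r := by
        rw [div_mul_eq_mul_div, le_div_iff₀ hβ]
        nlinarith
      linarith
    refine ⟨Real.smoothTransition.one_of_one_le h1, ?_⟩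
    simp only [ζ']
    rw [st_deriv_right _ h1, zero_mul]
  have hsub : ∀ r ∈ Set.uIoc 0 β, 0 < r := by
    intro r hr
    rw [Set.uIoc_of_le hβ.le] at hr
    exact hr.1
  have hn1 : (0:ℝ) ≤ (n:ℝ) - 1 := by
    have : (2:ℝ) ≤ n := by exact_mod_cast hn
    linarith
  have T1 : Tendsto (fun k => ∫ r in (0:ℝ)..β, (n - 1 : ℝ) * (r ^ (n-1) *
        (w r ^ 2 / Sf w r * (h r * ζ k r) ^ 2))) atTop
      (𝓝 (∫ r in (0:ℝ)..β, (n - 1 : ℝ) * (r ^ (n-1) * (w r ^ 2 / Sf w r * h r ^ 2)))) := by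
    apply intervalIntegral.tendsto_integral_filter_of_dominated_convergence
      (fun r => (n - 1 : ℝ) * (|r ^ (n-1)| * (w r ^ 2 / Sf w r * |h r| ^ 2)))
    · refine Eventually.of_forall fun k => Continuous.aestronglyMeasurable ?_
      have := cζ k
      fun_prop (disch := assumption)
    · refine Eventually.of_forall fun k => Eventually.of_forall fun r hr => ?_
      have hS := Sf_pos w r
      rw [Real.norm_eq_abs, abs_mul, abs_mul, abs_mul (_ / _), abs_of_nonneg hn1,
        abs_of_nonneg (a := w r ^ 2 / Sf w r) (by positivity), abs_pow (_ * _), abs_mul (h r)]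
      gcongr
      exact mul_le_of_le_one_right (abs_nonneg _) (hζb k r)
    · exact Continuous.intervalIntegrable (by fun_prop (disch := assumption)) _ _
    · refine Eventually.of_forall fun r hr => ?_
      refine tendsto_const_nhds.congr' ?_
      filter_upwards [hev r (hsub r hr)] with k hk
      rw [hk.1, mul_one]
  have T2 : Tendsto (fun k => ∫ r in (0:ℝ)..β, r ^ (n-1) *
        (w r ^ 2 * ((h r + r * deriv h r) * ζ k r + h r * (r * ζ' k r)) ^ 2 / Sf w r ^ 3)) atTop
      (𝓝 (∫ r in (0:ℝ)..β, r ^ (n-1) *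
        (w r ^ 2 * (h r + r * deriv h r) ^ 2 / Sf w r ^ 3))) := by
    apply intervalIntegral.tendsto_integral_filter_of_dominated_convergence
      (fun r => |r ^ (n-1)| * (w r ^ 2 * (|h r + r * deriv h r| + |h r| * (2 * M)) ^ 2
        / Sf w r ^ 3))
    · refine Eventually.of_forall fun k => Continuous.aestronglyMeasurable ?_
      have := cζ k
      have := cζ' k
      fun_prop (disch := assumption)
    · refine Eventually.of_forall fun k => Eventually.of_forall fun r hr => ?_
      have hS : 0 < Sf w r ^ 3 := pow_pos (Sf_pos w r) 3
      rw [Real.norm_eq_abs, abs_mul, abs_div, abs_mul (w r ^ 2), abs_of_pos hS,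
        abs_of_nonneg (sq_nonneg (w r)), abs_pow (_ + _)]
      gcongr
      refine (abs_add_le _ _).trans ?_
      rw [abs_mul, abs_mul (h r)]
      gcongr
      · exact mul_le_of_le_one_right (abs_nonneg _) (hζb k r)
      · exact hζ'b k r (hsub r hr).le
    · exact Continuous.intervalIntegrable (by fun_prop (disch := assumption)) _ _
    · refine Eventually.of_forall fun r hr => ?_
      refine tendsto_const_nhds.congr' ?_
      filter_upwards [hev r (hsub r hr)] with k hk
      rw [hk.1, hk.2, mul_one, mul_zero, mul_zero, add_zero]
  refine le_of_tendsto_of_tendsto' T1 T2 fun k => ?_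
  have hα : 0 < 1 / c k := by have := hc k; positivity
  have hαβ : 1 / c k ≤ β := by
    simp only [c]
    rw [one_div_div, div_le_iff₀ (by positivity)]
    have : (0:ℝ) ≤ k := by positivity
    nlinarith
  have hsm : ContDiff ℝ (⊤ : ℕ∞) (fun r => r * h r * ζ k r) := by
    refine (contDiff_id.mul hh).mul ?_
    exact Real.smoothTransition.contDiff.comp ((contDiff_const.mul contDiff_id).sub contDiff_const)
  have key := ineq1D hn f G w w1 hf hG hw hw1 hs (fun r => r * h r * ζ k r) (1 / c k) β hα hαβ hsm
    (fun r hr => by simp [hζ0 k r hr]) (fun r hr => by simp [h2 r hr])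
  have hder : ∀ r, deriv (fun r => r * h r * ζ k r) r
      = (h r + r * deriv h r) * ζ k r + h r * (r * ζ' k r) := by
    intro r
    have a : HasDerivAt (fun r => r * h r * ζ k r)
        ((1 * h r + r * deriv h r) * ζ k r + (r * h r) * ζ' k r) r :=
      ((hasDerivAt_id' r).mul (hd r)).mul (hζ k r)
    rw [a.deriv]
    ring
  have d2 : ∀ r, β ≤ r → deriv h r = 0 := by
    intro r hr
    have a1 : HasDerivWithinAt h 0 (Set.Ici r) r :=
      (hasDerivWithinAt_const r _ (0:ℝ)).congr (fun y hy => h2 y (le_trans hr hy)) (h2 r hr)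
    exact (uniqueDiffWithinAt_Ici r).eq_deriv _ (hd r).hasDerivWithinAt a1
  simp only [hder] at key
  rw [← aux_Ioi_interval (1 / c k) β hα.le hαβ, ← aux_Ioi_interval (1 / c k) β hα.le hαβ] at key
  · rw [← aux_Ioi_interval 0 β le_rfl hβ.le, ← aux_Ioi_interval 0 β le_rfl hβ.le]
    · refine le_of_eq_of_le ?_ key
      apply setIntegral_congr_fun measurableSet_Ioi
      intro r hr
      have hr0 : r ≠ 0 := (Set.mem_Ioi.mp hr).ne'
      have := hSn r
      simp only
      field_simp
    · intro r h1 h2; linarith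
    · intro r hr
      simp [h2 r hr.le, d2 r hr.le]
    · intro r h1 h2; linarith
    · intro r hr; simp [h2 r hr.le]
  · intro r _ hr; simp [hζ0 k r hr, hζ'0 k r hr]
  · intro r hr
    simp [h2 r hr.le, d2 r hr.le]
  · intro r _ hr; simp [hζ0 k r hr]
  · intro r hr; simp [h2 r hr.le]

lemma final1D {n : ℕ} (hn : 2 ≤ n) (f G w w1 : ℝ → ℝ) (hf : ContDiff ℝ 1 f)
    (hG : ∀ r, HasDerivAt G (w r) r) (hw : ∀ r, HasDerivAt w (w1 r) r) (hw1 : ContDiff ℝ 1 w1)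
    (hs : IsStableSolution (Set.univ : Set (Euc n)) f (fun x => G ‖x‖))
    (M : ℝ) (hM0 : 0 ≤ M) (hM : ∀ x, |deriv Real.smoothTransition x| ≤ M)
    (b : ℝ) (hb1 : 1 ≤ b) (hb2 : b ^ 2 = (n:ℝ) - 1) (ρ R : ℝ) (hρ : 0 < ρ) (hρR : ρ < R) :
    (b ^ 2 * (2 * ρ ^ 2) ^ (-(b + 1))) * ∫ r in (0:ℝ)..ρ, r ^ (n-1) * ((w r ^ 2) ^ 2 / Sf w r ^ 3)
      ≤ ((b + 2 * M) ^ 2 * (R ^ 2) ^ (-(b + 1))) *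
        ∫ r in R..(2 * R), r ^ (n-1) * (w r ^ 2 / Sf w r ^ 3) := by
  have hR : 0 < R := hρ.trans hρR
  have cw : Continuous w := continuous_iff_continuousAt.mpr fun r => (hw r).continuousAt
  have cS := Sf_cont w w1 hw
  have hSn : ∀ r, Sf w r ≠ 0 := fun r => (Sf_pos w r).ne'
  have hS3 : ∀ r, Sf w r ^ 3 ≠ 0 := fun r => pow_ne_zero _ (hSn r)
  have hpos : ∀ r : ℝ, 0 < ρ ^ 2 + r ^ 2 := fun r => by positivity
  let h0 : ℝ → ℝ := fun r => (ρ ^ 2 + r ^ 2) ^ (-(b + 1) / 2)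
  let s : ℝ → ℝ := fun r => r ^ 2 / (ρ ^ 2 + r ^ 2)
  let χ : ℝ → ℝ := fun r => Real.smoothTransition (2 - r / R)
  let χ' : ℝ → ℝ := fun r => deriv Real.smoothTransition (2 - r / R)
  let h : ℝ → ℝ := fun r => h0 r * χ r
  have h0pos : ∀ r, 0 < h0 r := fun r => Real.rpow_pos_of_pos (hpos r) _
  have h0sq : ∀ r, h0 r ^ 2 = (ρ ^ 2 + r ^ 2) ^ (-(b + 1)) := by
    intro r
    simp only [h0]
    rw [← Real.rpow_natCast, ← Real.rpow_mul (hpos r).le]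
    congr 1
    push_cast
    ring
  have hh : ContDiff ℝ (⊤ : ℕ∞) h := by
    refine ContDiff.mul ?_ ?_
    · exact ContDiff.rpow_const_of_ne (by fun_prop) (fun r => (hpos r).ne')
    · exact Real.smoothTransition.contDiff.comp (contDiff_const.sub (contDiff_id.div_const R))
  have h0d : ∀ r, HasDerivAt h0 (2 * r * (-(b + 1) / 2) * (h0 r / (ρ ^ 2 + r ^ 2))) r := by
    intro r
    have a : HasDerivAt (fun r : ℝ => ρ ^ 2 + r ^ 2) (2 * r) r := by
      simpa using (hasDerivAt_pow 2 r).const_add (ρ ^ 2)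
    have a2 := a.rpow_const (p := -(b + 1) / 2) (Or.inl (hpos r).ne')
    rw [Real.rpow_sub_one (hpos r).ne'] at a2
    exact a2
  have χd : ∀ r, HasDerivAt χ (χ' r * (-(1 / R))) r := by
    intro r
    have a : HasDerivAt (fun r : ℝ => 2 - r / R) (-(1 / R)) r :=
      ((hasDerivAt_id' r).div_const R).const_sub 2
    exact (st_hasDeriv (2 - r / R)).comp r a
  have hder : ∀ r, h r + r * deriv h r
      = h0 r * ((1 - (b + 1) * s r) * χ r - r / R * χ' r) := by
    intro r
    have a : HasDerivAt h (2 * r * (-(b + 1) / 2) * (h0 r / (ρ ^ 2 + r ^ 2)) * χ r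
        + h0 r * (χ' r * (-(1 / R)))) r := (h0d r).mul (χd r)
    rw [a.deriv]
    simp only [h, s]
    have := (hpos r).ne'
    field_simp
    ring
  have hs01 : ∀ r, 0 ≤ s r ∧ s r ≤ 1 := by
    intro r
    have := hpos r
    refine ⟨by simp only [s]; positivity, ?_⟩
    simp only [s]
    rw [div_le_one this]
    nlinarith [sq_nonneg ρ]
  have hsb : ∀ r, |1 - (b + 1) * s r| ≤ b := by
    intro r
    obtain ⟨a1, a2⟩ := hs01 r
    rw [abs_le]
    constructor <;> nlinarith
  have hlow : ∀ r, r ≤ R → χ r = 1 ∧ χ' r = 0 := by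
    intro r hr
    have : 1 ≤ 2 - r / R := by
      have := (div_le_one hR).mpr hr
      linarith
    exact ⟨Real.smoothTransition.one_of_one_le this, st_deriv_right _ this⟩
  have hz : ∀ r, 2 * R ≤ r → h r = 0 := by
    intro r hr
    simp only [h, χ]
    rw [Real.smoothTransition.zero_of_nonpos, mul_zero]
    have := (le_div_iff₀ hR).mpr hr
    linarith
  have main := limit1D hn f G w w1 hf hG hw hw1 hs h (2 * R) (by positivity) hh hz
  have hh1 : ContDiff ℝ 1 h := hh.of_le (by exact_mod_cast le_top)
  have cd : Continuous (deriv h) := hh1.continuous_deriv le_rfl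
  have ch := hh1.continuous
  let E : ℝ → ℝ := fun r => r ^ (n-1) * (w r ^ 2 * (h r + r * deriv h r) ^ 2 / Sf w r ^ 3)
    - (n - 1 : ℝ) * (r ^ (n-1) * (w r ^ 2 / Sf w r * h r ^ 2))
  have cE1 : Continuous (fun r => r ^ (n-1) * (w r ^ 2 * (h r + r * deriv h r) ^ 2 / Sf w r ^ 3)) := by
    fun_prop (disch := assumption)
  have cE2 : Continuous (fun r => (n - 1 : ℝ) * (r ^ (n-1) * (w r ^ 2 / Sf w r * h r ^ 2))) := by
    fun_prop (disch := assumption)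
  have cE : Continuous E := cE1.sub cE2
  have m1 : 0 ≤ ∫ r in (0:ℝ)..(2*R), E r := by
    simp only [E]
    rw [intervalIntegral.integral_sub (cE1.intervalIntegrable _ _) (cE2.intervalIntegrable _ _)]
    linarith
  have hEeq : ∀ r, E r = r ^ (n-1) * (w r ^ 2 / Sf w r ^ 3) *
      ((h r + r * deriv h r) ^ 2 - b ^ 2 * (1 + w r ^ 2) * h r ^ 2) := by
    intro r
    simp only [E]
    rw [← hb2, ← Sf_sq]
    have := hSn r
    field_simp
  have hElow : ∀ r, 0 ≤ r → r ≤ R → E r ≤ -(r ^ (n-1) * ((w r ^ 2) ^ 2 / Sf w r ^ 3)) *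
      (b ^ 2 * h0 r ^ 2) := by
    intro r hr0 hr
    rw [hEeq, hder]
    simp only [h]
    rw [(hlow r hr).1, (hlow r hr).2]
    have h1 : (1 - (b + 1) * s r) ^ 2 ≤ b ^ 2 := sq_le_sq' (abs_le.mp (hsb r)).1 (abs_le.mp (hsb r)).2
    have h3 : 0 ≤ r ^ (n-1) * (w r ^ 2 / Sf w r ^ 3) := by
      have := Sf_pos w r
      positivity
    have h4 : (h0 r * ((1 - (b + 1) * s r) * 1 - r / R * 0)) ^ 2 - b ^ 2 * (1 + w r ^ 2) * (h0 r * 1) ^ 2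
        ≤ - (w r ^ 2 * (b ^ 2 * h0 r ^ 2)) := by
      nlinarith [mul_le_mul_of_nonneg_right h1 (sq_nonneg (h0 r))]
    refine (mul_le_mul_of_nonneg_left h4 h3).trans (le_of_eq ?_)
    ring
  have i1 : ∫ r in (0:ℝ)..ρ, E r ≤ ∫ r in (0:ℝ)..ρ,
      -(b ^ 2 * (2 * ρ ^ 2) ^ (-(b + 1))) * (r ^ (n-1) * ((w r ^ 2) ^ 2 / Sf w r ^ 3)) := by
    apply intervalIntegral.integral_mono_on hρ.le (cE.intervalIntegrable _ _)
    · exact Continuous.intervalIntegrable (by fun_prop (disch := assumption)) _ _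
    · intro r hr
      refine (hElow r hr.1 (hr.2.trans hρR.le)).trans ?_
      have h3 : 0 ≤ r ^ (n-1) * ((w r ^ 2) ^ 2 / Sf w r ^ 3) := by
        have := Sf_pos w r
        have := hr.1
        positivity
      have h5 : (2 * ρ ^ 2) ^ (-(b + 1)) ≤ h0 r ^ 2 := by
        rw [h0sq]
        apply Real.rpow_le_rpow_of_nonpos (hpos r)
        · nlinarith [hr.1, hr.2]
        · linarith
      have h6 := mul_le_mul_of_nonneg_left h5 (sq_nonneg b)
      nlinarith [mul_le_mul_of_nonneg_left h6 h3]
  have i2 : ∫ r in ρ..R, E r ≤ 0 := by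
    rw [← neg_nonneg, ← intervalIntegral.integral_neg]
    apply intervalIntegral.integral_nonneg hρR.le
    intro r hr
    have hr0 : 0 ≤ r := hρ.le.trans hr.1
    have h1 := hElow r hr0 hr.2
    have h3 : 0 ≤ r ^ (n-1) * ((w r ^ 2) ^ 2 / Sf w r ^ 3) * (b ^ 2 * h0 r ^ 2) := by
      have := Sf_pos w r
      positivity
    linarith
  have i3 : ∫ r in R..(2*R), E r ≤ ∫ r in R..(2*R),
      ((b + 2 * M) ^ 2 * (R ^ 2) ^ (-(b + 1))) * (r ^ (n-1) * (w r ^ 2 / Sf w r ^ 3)) := by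
    apply intervalIntegral.integral_mono_on (by linarith) (cE.intervalIntegrable _ _)
    · exact Continuous.intervalIntegrable (by fun_prop (disch := assumption)) _ _
    · intro r hr
      have hr0 : 0 ≤ r := hR.le.trans hr.1
      rw [hEeq, hder]
      have h3 : 0 ≤ r ^ (n-1) * (w r ^ 2 / Sf w r ^ 3) := by
        have := Sf_pos w r
        positivity
      have h5 : h0 r ^ 2 ≤ (R ^ 2) ^ (-(b + 1)) := by
        rw [h0sq]
        apply Real.rpow_le_rpow_of_nonpos (by positivity)
        · nlinarith [hr.1, hr.2]
        · linarith
      have h6 : |(1 - (b + 1) * s r) * χ r - r / R * χ' r| ≤ b + 2 * M := by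
        refine (abs_sub _ _).trans ?_
        rw [abs_mul, abs_mul]
        have c1 : |χ r| ≤ 1 := by
          rw [abs_of_nonneg (Real.smoothTransition.nonneg _)]
          exact Real.smoothTransition.le_one _
        have c2 : |r / R| ≤ 2 := by
          rw [abs_of_nonneg (by positivity), div_le_iff₀ hR]
          exact hr.2
        have c3 := mul_le_mul (hsb r) c1 (abs_nonneg _) (by linarith)
        have c4 := mul_le_mul c2 (hM (2 - r / R)) (abs_nonneg _) (by norm_num)
        simp only [χ'] 
        linarith
      have h7 : ((1 - (b + 1) * s r) * χ r - r / R * χ' r) ^ 2 ≤ (b + 2 * M) ^ 2 :=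
        sq_le_sq' (abs_le.mp h6).1 (abs_le.mp h6).2
      have h8 : (h0 r * ((1 - (b + 1) * s r) * χ r - r / R * χ' r)) ^ 2
          - b ^ 2 * (1 + w r ^ 2) * h r ^ 2 ≤ (b + 2 * M) ^ 2 * (R ^ 2) ^ (-(b + 1)) := by
        have c5 : 0 ≤ b ^ 2 * (1 + w r ^ 2) * h r ^ 2 := by positivity
        have c6 := mul_le_mul h7 h5 (sq_nonneg _) (sq_nonneg _)
        rw [mul_pow]
        linarith
      rw [mul_comm]
      exact mul_le_mul_of_nonneg_right h8 h3
  have split : ∫ r in (0:ℝ)..(2*R), E r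
      = (∫ r in (0:ℝ)..ρ, E r) + (∫ r in ρ..R, E r) + ∫ r in R..(2*R), E r := by
    rw [intervalIntegral.integral_add_adjacent_intervals (cE.intervalIntegrable _ _) (cE.intervalIntegrable _ _),
      intervalIntegral.integral_add_adjacent_intervals (cE.intervalIntegrable _ _) (cE.intervalIntegrable _ _)]
  rw [intervalIntegral.integral_const_mul] at i1 i3
  linarith

lemma ball_polar {n : ℕ} (hn : 2 ≤ n) (H : Euc n → ℝ) (F : ℝ → ℝ) (hH : ∀ x, x ≠ 0 → H x = F ‖x‖)
    (ρ : ℝ) (hρ : 0 < ρ) :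
    ∫ x in ball (0 : Euc n) ρ, H x = cn n * ∫ r in (0:ℝ)..ρ, r ^ (n-1) * F r := by
  rw [← integral_indicator measurableSet_ball,
    aux_polar n hn _ ((Set.Iio ρ).indicator F)]
  · congr 1
    rw [intervalIntegral.integral_of_le hρ.le, integral_Ioc_eq_integral_Ioo]
    rw [← integral_indicator measurableSet_Ioi, ← integral_indicator measurableSet_Ioo]
    congr 1
    funext r
    simp only [Set.indicator_apply, Set.mem_Ioi, Set.mem_Iio, Set.mem_Ioo]
    by_cases h1 : 0 < r <;> by_cases h2 : r < ρ <;> simp [h1, h2]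
  · intro x hx
    by_cases h : ‖x‖ < ρ
    · rw [Set.indicator_of_mem (mem_ball_zero_iff.mpr h), Set.indicator_of_mem (Set.mem_Iio.mpr h),
        hH x hx]
    · rw [Set.indicator_of_notMem (fun h' => h (mem_ball_zero_iff.mp h')),
        Set.indicator_of_notMem (fun h' => h (Set.mem_Iio.mp h'))]

lemma annulus_polar {n : ℕ} (hn : 2 ≤ n) (H : Euc n → ℝ) (F : ℝ → ℝ)
    (hH : ∀ x, x ≠ 0 → H x = F ‖x‖) (R : ℝ) (hR : 0 < R) :
    ∫ x in ball (0 : Euc n) (2 * R) \ ball (0 : Euc n) R, H x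
      = cn n * ∫ r in R..(2 * R), r ^ (n-1) * F r := by
  rw [← integral_indicator (measurableSet_ball.diff measurableSet_ball),
    aux_polar n hn _ ((Set.Ico R (2 * R)).indicator F)]
  · congr 1
    rw [intervalIntegral.integral_of_le (by linarith), ← integral_Ico_eq_integral_Ioc]
    rw [← integral_indicator measurableSet_Ioi, ← integral_indicator measurableSet_Ico]
    congr 1
    funext r
    simp only [Set.indicator_apply, Set.mem_Ioi, Set.mem_Ico]
    by_cases h1 : R ≤ r
    · have : 0 < r := hR.trans_le h1
      simp [h1, this]
    · simp [h1]
  · intro x hx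
    by_cases h : R ≤ ‖x‖ ∧ ‖x‖ < 2 * R
    · rw [Set.indicator_of_mem (show x ∈ ball (0 : Euc n) (2 * R) \ ball (0 : Euc n) R from
          ⟨mem_ball_zero_iff.mpr h.2, fun h' => absurd (mem_ball_zero_iff.mp h') (not_lt.mpr h.1)⟩),
        Set.indicator_of_mem (show ‖x‖ ∈ Set.Ico R (2 * R) from h), hH x hx]
    · rw [Set.indicator_of_notMem (fun h' : x ∈ ball (0 : Euc n) (2 * R) \ ball (0 : Euc n) R =>
          h ⟨not_lt.mp fun hlt => h'.2 (mem_ball_zero_iff.mpr hlt), mem_ball_zero_iff.mp h'.1⟩),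
        Set.indicator_of_notMem (fun h' : ‖x‖ ∈ Set.Ico R (2 * R) => h h')]

/-- **Key global estimate in the radial case.**
Let `n ≥ 2` and set `a = √(n-1)+1`.  If `u` is a `W^{3,1}_loc(ℝⁿ)` stable solution of
`div(∇u/√(1+|∇u|²)) = -f(u)` in `ℝⁿ` (`f ∈ C¹(ℝ)`), radially symmetric with respect to
the origin, and `z = |∇u|²`, then there is a dimensional constant `C > 0` such that
`(1/ρ^{2a}) ∫_{B_ρ} z²/(1+z)^{3/2} ≤ (C/R^{2a}) ∫_{B_{2R}∖B_R} z/(1+z)^{3/2}`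
for all `0 < ρ < R`. -/
theorem stmt_19 (n : ℕ) (hn : 2 ≤ n) :
    ∃ C > (0:ℝ), ∀ (f : ℝ → ℝ) (u : Euc n → ℝ) (g : ℝ → ℝ),
      ContDiff ℝ 1 f →
      ContDiff ℝ 3 u →
      IsStableSolution (Set.univ : Set (Euc n)) f u →
      (∀ x : Euc n, u x = g ‖x‖) →
      ∀ ρ R : ℝ, 0 < ρ → ρ < R →
        1 / ρ ^ (2 * (Real.sqrt ((n:ℝ) - 1) + 1)) *
            ∫ x in ball (0 : Euc n) ρ,
              (‖gradient u x‖ ^ 2) ^ 2 / (1 + ‖gradient u x‖ ^ 2) ^ ((3:ℝ)/2)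
          ≤ C / R ^ (2 * (Real.sqrt ((n:ℝ) - 1) + 1)) *
            ∫ x in ball (0 : Euc n) (2*R) \ ball (0 : Euc n) R,
              ‖gradient u x‖ ^ 2 / (1 + ‖gradient u x‖ ^ 2) ^ ((3:ℝ)/2) := by
  obtain ⟨M, hM0, hM⟩ := st_bound
  have hn2 : (2:ℝ) ≤ n := by exact_mod_cast hn
  set b : ℝ := Real.sqrt ((n:ℝ) - 1) with hb
  have hb2 : b ^ 2 = (n:ℝ) - 1 := Real.sq_sqrt (by linarith)
  have hb1 : 1 ≤ b := by
    rw [hb, Real.one_le_sqrt]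
    linarith
  refine ⟨(b + 2 * M) ^ 2 / (b ^ 2 * 2 ^ (-(b + 1))), by positivity, ?_⟩
  intro f u g hf hu hs hg ρ R hρ hρR
  have hR : 0 < R := hρ.trans hρR
  obtain ⟨G, hG3, rfl⟩ := aux_setup hn u g hu hg
  have hG3' : ContDiff ℝ (2 + 1) G := hG3.of_le (by norm_num)
  have hw2 : ContDiff ℝ 2 (deriv G) := (contDiff_succ_iff_deriv.mp hG3').2.2
  have hw2' : ContDiff ℝ (1 + 1) (deriv G) := hw2.of_le (by norm_num)
  have hw1 : ContDiff ℝ 1 (deriv (deriv G)) := (contDiff_succ_iff_deriv.mp hw2').2.2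
  have dG : ∀ r, HasDerivAt G (deriv G r) r := fun r =>
    (hG3.differentiable (by norm_num)).differentiableAt.hasDerivAt
  have dw : ∀ r, HasDerivAt (deriv G) (deriv (deriv G) r) r := fun r =>
    (hw2.differentiable (by norm_num)).differentiableAt.hasDerivAt
  have key := final1D hn f G (deriv G) (deriv (deriv G)) hf dG dw hw1 hs M hM0 hM b hb1 hb2
    ρ R hρ hρR
  rw [ball_polar hn _ (fun r => (deriv G r ^ 2) ^ 2 / Sf (deriv G) r ^ 3) _ ρ hρ,
    annulus_polar hn _ (fun r => deriv G r ^ 2 / Sf (deriv G) r ^ 3) _ R hR]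
  · have hc := cn_pos n hn
    set I := ∫ r in (0:ℝ)..ρ, r ^ (n-1) * ((deriv G r ^ 2) ^ 2 / Sf (deriv G) r ^ 3)
    set J := ∫ r in R..(2 * R), r ^ (n-1) * (deriv G r ^ 2 / Sf (deriv G) r ^ 3)
    have e1 : (2 * ρ ^ 2) ^ (-(b + 1)) = 2 ^ (-(b + 1)) * (1 / ρ ^ (2 * (b + 1))) := by
      rw [Real.mul_rpow (by norm_num) (by positivity), Real.rpow_neg (by positivity : 0 ≤ ρ ^ 2),
        ← Real.rpow_natCast ρ 2, ← Real.rpow_mul hρ.le]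
      norm_num
    have e2 : (R ^ 2) ^ (-(b + 1)) = 1 / R ^ (2 * (b + 1)) := by
      rw [Real.rpow_neg (by positivity : 0 ≤ R ^ 2),
        ← Real.rpow_natCast R 2, ← Real.rpow_mul hR.le]
      norm_num
    rw [e1, e2] at key
    have hK : 0 < b ^ 2 * (2:ℝ) ^ (-(b + 1)) := by positivity
    set K := b ^ 2 * (2:ℝ) ^ (-(b + 1)) with hKdef
    have key2 : K * (1 / ρ ^ (2 * (b + 1)) * I) ≤
        K * ((b + 2 * M) ^ 2 / K / R ^ (2 * (b + 1)) * J) := by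
      have t1 : K * (1 / ρ ^ (2 * (b + 1)) * I)
          = b ^ 2 * (2 ^ (-(b + 1)) * (1 / ρ ^ (2 * (b + 1)))) * I := by
        rw [hKdef]; ring
      have t2 : K * ((b + 2 * M) ^ 2 / K / R ^ (2 * (b + 1)) * J)
          = (b + 2 * M) ^ 2 * (1 / R ^ (2 * (b + 1))) * J := by
        field_simp
      rw [t1, t2]
      exact key
    have key3 := le_of_mul_le_mul_left key2 hK
    have key4 := mul_le_mul_of_nonneg_left key3 hc.le
    linarith
  · intro x hx
    rw [aux_grad_norm G (deriv G) dG x hx, aux_rpow_s19 _ (by positivity)]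
    rfl
  · intro x hx
    rw [aux_grad_norm G (deriv G) dG x hx, aux_rpow_s19 _ (by positivity)]
    rfl
end
end
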